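/- arXiv:1802.06253 — 2 statements merged into one kernel-verified Lean document; each statement's English description precedes it below -/
import Mathlib

section
/- Let $I = (q_0,\ldots,q_m) \subset \mathbb{C}[x_0,\ldots,x_m]$ be a complete intersection ideal generated by forms of degree $d \geq 2$ (i.e., the $q_i$ have no common projective zero). Then the set of points $[Q] \in \mathbb{P}(I_d)$ such that $Q = z^d$ for some linear form $z$ is finite. -/
open MvPolynomial

noncomputable section

/-- The linear form with coefficient vector `p`. -/
def linform {n : ℕ} (p : Fin n → ℂ) : MvPolynomial (Fin n) ℂ :=
  ∑ i, MvPolynomial.C (p i) * MvPolynomial.X i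

/-- The apolarity pairing `⟨f, g⟩ = ∑_α f_α g_α α!` between polynomial spaces
(`f` viewed in `S^d U^*`, `g` in `S^d U`). -/
def apolar {n : ℕ} (f g : MvPolynomial (Fin n) ℂ) : ℂ :=
  ∑ α ∈ f.support, f.coeff α * g.coeff α * ∏ i, ((α i).factorial : ℂ)

/-!
By the Nullstellensatz the `q i` generate an ideal containing a power of the irrelevant ideal, so
the polynomial ring is finite over `K[q]`. In characteristic zero a derivation killing the `q i`
then vanishes, which forces the Jacobian determinant `J` of `q` to be nonzero. If
`l ^ k = ∑ i, a i • q i` with `2 ≤ k`, then `l` divides every partial derivative of the right-hand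
side, that is, every entry of `a` times the Jacobian matrix, and by Cramer's rule it divides `J`.
So `l ^ k` is one of the divisors of `J ^ k`, and up to scalars there are only finitely many.
-/

section Derivation

variable {R B M : Type*} [CommRing R] [CommRing B] [IsDomain B] [Algebra R B]
  [AddCommGroup M] [Module R M] [Module B M] [Module.IsTorsionFree B M]

theorem derivation_apply_eq_zero_of_isAlgebraic [IsAddTorsionFree R] [FaithfulSMul R B]
    (D : Derivation R B M) {x : B} (hx : IsAlgebraic R x) : D x = 0 := by
  obtain ⟨p, hp, hpx⟩ := hx
  induction hn : p.natDegree using Nat.strong_induction_on generalizing p with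
  | _ n ih =>
    have hdeg : p.natDegree ≠ 0 := (Polynomial.natDegree_pos_of_aeval_root hp hpx fun r hr =>
      (FaithfulSMul.algebraMap_eq_zero_iff R B).mp hr).ne'
    have hDx : Polynomial.aeval x p.derivative • D x = 0 := by
      rw [← D.map_aeval, hpx, map_zero]
    refine (smul_eq_zero.mp hDx).elim (fun hroot => ?_) id
    exact ih _ (hn ▸ Polynomial.natDegree_derivative_lt hdeg) _
      (Polynomial.derivative_ne_zero.mpr hdeg) hroot rfl

theorem derivation_apply_eq_zero_of_isAlgebraic_adjoin [CharZero B] {D : Derivation R B M}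
    {s : Set B} (hs : ∀ a ∈ s, D a = 0) {x : B} (hx : IsAlgebraic (Algebra.adjoin R s) x) :
    D x = 0 := by
  have hD : ∀ a ∈ Algebra.adjoin R s, D a = 0 := Derivation.eqOn_adjoin (D2 := 0) hs
  let D' : Derivation (Algebra.adjoin R s) B M :=
    { toFun := D
      map_add' := map_add D
      map_smul' := fun a b => by simp [Subalgebra.smul_def, hD a a.2]
      map_one_eq_zero' := D.map_one_eq_zero
      leibniz' := D.leibniz }
  exact derivation_apply_eq_zero_of_isAlgebraic D' hx

end Derivation

theorem dvd_det_of_forall_dvd_vecMul {R n : Type*} [CommRing R] [Fintype n] [DecidableEq n]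
    {M : Matrix n n R} {a : n → R} {l : R} {i : n} (ha : IsUnit (a i))
    (h : ∀ j, l ∣ Matrix.vecMul a M j) : l ∣ M.det := by
  have cramer : Matrix.vecMul (Matrix.vecMul a M) M.adjugate i = a i * M.det := by
    rw [Matrix.vecMul_vecMul, Matrix.mul_adjugate, Matrix.vecMul_smul, Matrix.vecMul_one,
      Pi.smul_apply, smul_eq_mul, mul_comm]
  rw [← ha.dvd_mul_left, ← cramer]
  exact Finset.dvd_sum fun j _ => (h j).mul_right _

section Finiteness

variable {σ ι R : Type*}

theorem homogeneousComponent_mul_of_isHomogeneous_right [CommSemiring R]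
    {f g : MvPolynomial σ R} {d : ℕ} (hg : g.IsHomogeneous d) (e : ℕ) :
    homogeneousComponent e (f * g) =
      if d ≤ e then homogeneousComponent (e - d) f * g else 0 := by
  let := gradedAlgebra (σ := σ) (R := R)
  rw [← decomposition.decompose'_apply, ← decomposition.decompose'_apply]
  exact DirectSum.coe_decompose_mul_of_right_mem (homogeneousSubmodule σ R) e hg

theorem homogeneousComponent_mem_of_mem_ideal_span [CommSemiring R] {q : ι → MvPolynomial σ R}
    {d : ι → ℕ} (hd : ∀ i, 0 < d i) (hq : ∀ i, (q i).IsHomogeneous (d i))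
    {A : Subalgebra R (MvPolynomial σ R)} (hA : ∀ i, q i ∈ A)
    {M : Submodule A (MvPolynomial σ R)} {e : ℕ}
    (hM : ∀ k < e, ∀ g : MvPolynomial σ R, g.IsHomogeneous k → g ∈ M)
    {f : MvPolynomial σ R} (hf : f ∈ Ideal.span (Set.range q)) :
    homogeneousComponent e f ∈ M := by
  obtain ⟨c, rfl⟩ := Finsupp.mem_ideal_span_range_iff_exists_finsupp.mp hf
  rw [Finsupp.sum, map_sum]
  refine Submodule.sum_mem _ fun i _ => ?_
  rw [homogeneousComponent_mul_of_isHomogeneous_right (hq i)]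
  split_ifs with hde
  · have hlow : homogeneousComponent (e - d i) (c i) ∈ M :=
      hM _ (Nat.sub_lt_self (hd i) hde) _ (homogeneousComponent_isHomogeneous _ _)
    rw [mul_comm]
    exact M.smul_mem ⟨q i, hA i⟩ hlow
  · exact M.zero_mem

theorem span_restrictTotalDegree_eq_top [CommSemiring R] {q : ι → MvPolynomial σ R}
    {d : ι → ℕ} (hd : ∀ i, 0 < d i) (hq : ∀ i, (q i).IsHomogeneous (d i))
    {N : ℕ} (hN : idealOfVars σ R ^ N ≤ Ideal.span (Set.range q))
    {A : Subalgebra R (MvPolynomial σ R)} (hA : ∀ i, q i ∈ A) :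
    Submodule.span A (restrictTotalDegree σ R N : Set (MvPolynomial σ R)) = ⊤ := by
  set M := Submodule.span A (restrictTotalDegree σ R N : Set (MvPolynomial σ R))
  have mem_of_isHomogeneous : ∀ e, ∀ f : MvPolynomial σ R, f.IsHomogeneous e → f ∈ M := by
    intro e
    induction e using Nat.strong_induction_on with
    | _ e ih =>
      intro f hf
      obtain he | he := le_total e N
      · exact Submodule.subset_span
          ((mem_restrictTotalDegree σ N f).mpr (hf.totalDegree_le.trans he))
      · have hfN : f ∈ idealOfVars σ R ^ N :=
          (mem_pow_idealOfVars_iff' N f).mpr fun α hα =>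
            hf.coeff_eq_zero (hα.trans_le he).ne
        rw [← homogeneousComponent_eq_self hf]
        exact homogeneousComponent_mem_of_mem_ideal_span hd hq hA ih (hN hfN)
  refine eq_top_iff.mpr fun f _ => ?_
  rw [← sum_homogeneousComponent f]
  exact Submodule.sum_mem _ fun e _ =>
    mem_of_isHomogeneous e _ (homogeneousComponent_isHomogeneous e f)

theorem finite_of_pow_idealOfVars_le [CommSemiring R] [Finite σ] {q : ι → MvPolynomial σ R}
    {d : ι → ℕ} (hd : ∀ i, 0 < d i) (hq : ∀ i, (q i).IsHomogeneous (d i))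
    {N : ℕ} (hN : idealOfVars σ R ^ N ≤ Ideal.span (Set.range q))
    {A : Subalgebra R (MvPolynomial σ R)} (hA : ∀ i, q i ∈ A) :
    Module.Finite A (MvPolynomial σ R) := by
  obtain ⟨s, hs⟩ : (restrictTotalDegree σ R N).FG := Module.Finite.iff_fg.mp inferInstance
  refine ⟨⟨s, ?_⟩⟩
  rw [← Submodule.span_span_of_tower R, hs]
  exact span_restrictTotalDegree_eq_top hd hq hN hA

theorem exists_pow_idealOfVars_le_span_of_forall_eval_eq_zero {K : Type*} [Field K]
    [IsAlgClosed K] [Finite σ] {q : ι → MvPolynomial σ K}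
    (hq : ∀ p : σ → K, (∀ i, eval p (q i) = 0) → p = 0) :
    ∃ N : ℕ, idealOfVars σ K ^ N ≤ Ideal.span (Set.range q) := by
  refine Ideal.exists_pow_le_of_le_radical_of_fg ?_ (idealOfVars_fg σ K)
  rw [← vanishingIdeal_zeroLocus_eq_radical (K := K), Ideal.span_le]
  rintro _ ⟨j, rfl⟩ p hp
  have hp0 : p = 0 := hq p fun i => by
    simpa [aeval_eq_eval] using hp (q i) (Ideal.subset_span ⟨i, rfl⟩)
  simp [hp0]

end Finiteness

section Jacobian

variable {σ ι R : Type*}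

/-- The Jacobian matrix `(∂qᵢ/∂xⱼ)` of a family of polynomials, rows indexed by the family and
columns by the variables. For a square family, its determinant is divisible by every nonzero `l`
such that `l ^ k` lies in the linear span of `q` for some `k ≥ 2`. -/
def jacobianMatrix [CommSemiring R] (q : ι → MvPolynomial σ R) : Matrix ι σ (MvPolynomial σ R) :=
  Matrix.of fun i j => pderiv j (q i)

theorem vecMul_jacobianMatrix [CommSemiring R] [Fintype ι] (q : ι → MvPolynomial σ R)
    (a : ι → R) (j : σ) :
    Matrix.vecMul (fun i => C (a i)) (jacobianMatrix q) j = pderiv j (∑ i, a i • q i) := by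
  simp [Matrix.vecMul, dotProduct, jacobianMatrix, smul_eq_C_mul]

theorem mkDerivation_apply_eq_sum_pderiv_mul [CommSemiring R] [Fintype σ]
    (v : σ → MvPolynomial σ R) (f : MvPolynomial σ R) :
    mkDerivation R v f = ∑ j, pderiv j f * v j := by
  classical
  induction f using MvPolynomial.induction_on with
  | C a => simp
  | add f g hf hg => simp only [map_add, hf, hg, add_mul, Finset.sum_add_distrib]
  | mul_X f i hf =>
    simp [hf, pderiv_X, Pi.single_apply, add_mul, Finset.sum_add_distrib, Finset.mul_sum, mul_assoc]

theorem mulVec_jacobianMatrix [CommSemiring R] [Fintype σ] (q : ι → MvPolynomial σ R)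
    (v : σ → MvPolynomial σ R) (i : ι) :
    Matrix.mulVec (jacobianMatrix q) v i = mkDerivation R v (q i) :=
  (mkDerivation_apply_eq_sum_pderiv_mul v (q i)).symm

theorem det_jacobianMatrix_ne_zero [CommRing R] [IsDomain R] [CharZero R] [Fintype σ]
    [DecidableEq σ] (q : σ → MvPolynomial σ R)
    [Algebra.IsAlgebraic (Algebra.adjoin R (Set.range q)) (MvPolynomial σ R)] :
    (jacobianMatrix q).det ≠ 0 := by
  intro hdet
  obtain ⟨v, hv, hJv⟩ := Matrix.exists_mulVec_eq_zero_iff.mpr hdet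
  have hvq : ∀ f ∈ Set.range q, mkDerivation R v f = 0 := by
    rintro _ ⟨i, rfl⟩
    rw [← mulVec_jacobianMatrix, hJv, Pi.zero_apply]
  refine hv (funext fun j => ?_)
  rw [← mkDerivation_X R v j]
  exact derivation_apply_eq_zero_of_isAlgebraic_adjoin hvq (Algebra.IsAlgebraic.isAlgebraic _)

theorem dvd_det_jacobianMatrix_of_pow_mem_span {K : Type*} [Field K] [Fintype σ] [DecidableEq σ]
    {q : σ → MvPolynomial σ K} {k : ℕ} (hk : 2 ≤ k) {l : MvPolynomial σ K} (hl : l ≠ 0)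
    (h : l ^ k ∈ Submodule.span K (Set.range q)) : l ∣ (jacobianMatrix q).det := by
  obtain ⟨a, ha⟩ := (Submodule.mem_span_range_iff_exists_fun K).mp h
  obtain ⟨i, hi⟩ : ∃ i, a i ≠ 0 := by
    by_contra! h0
    exact pow_ne_zero k hl (by simp [← ha, h0])
  refine dvd_det_of_forall_dvd_vecMul (a := fun i => C (a i)) (hi.isUnit.map C) fun j => ?_
  have hdvd : l ∣ l ^ (k - 1) := dvd_pow_self l (by lia)
  rw [vecMul_jacobianMatrix, ha, Derivation.leibniz_pow, smul_eq_mul, nsmul_eq_mul]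
  exact (hdvd.mul_right _).mul_left _

end Jacobian

section Divisors

variable {σ K : Type*} [Field K]

theorem eq_of_associated_rep {x y : Projectivization K (MvPolynomial σ K)}
    (h : Associated y.rep x.rep) : x = y := by
  obtain ⟨u, hu⟩ := h
  obtain ⟨r, -, hr⟩ := isUnit_iff_eq_C_of_isReduced.mp u.isUnit
  rw [← x.mk_rep, ← y.mk_rep, Projectivization.mk_eq_mk_iff']
  exact ⟨r, by rw [← hu, hr, smul_eq_C_mul, mul_comm]⟩

theorem finite_setOf_rep_dvd {f : MvPolynomial σ K} (hf : f ≠ 0) :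
    {x : Projectivization K (MvPolynomial σ K) | x.rep ∣ f}.Finite := by
  have hfin : {y | y ∣ Associates.mk f}.Finite := Set.finite_coe_iff.mp <| Fintype.finite <|
    UniqueFactorizationMonoid.fintypeSubtypeDvd _ (Associates.mk_ne_zero.mpr hf)
  refine hfin.of_injOn (f := fun x => Associates.mk x.rep)
    (fun x hx => Associates.mk_dvd_mk.mpr hx) fun x _ y _ hxy => ?_
  exact eq_of_associated_rep (Associates.mk_eq_mk_iff_associated.mp hxy).symm

end Divisors

theorem stmt2_general {σ K : Type*} [Finite σ] [Field K] [IsAlgClosed K] [CharZero K]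
    {q : σ → MvPolynomial σ K} {d : σ → ℕ} (hd : ∀ i, 0 < d i)
    (hhom : ∀ i, (q i).IsHomogeneous (d i))
    (hq : ∀ p : σ → K, (∀ i, eval p (q i) = 0) → p = 0) {k : ℕ} (hk : 2 ≤ k) :
    {x : Projectivization K (MvPolynomial σ K) |
      x.rep ∈ Submodule.span K (Set.range q) ∧ ∃ l : MvPolynomial σ K, x.rep = l ^ k}.Finite := by
  classical
  have := Fintype.ofFinite σ
  obtain ⟨N, hN⟩ := exists_pow_idealOfVars_le_span_of_forall_eval_eq_zero hq
  have : Module.Finite (Algebra.adjoin K (Set.range q)) (MvPolynomial σ K) :=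
    finite_of_pow_idealOfVars_le hd hhom hN fun i => Algebra.subset_adjoin ⟨i, rfl⟩
  refine (finite_setOf_rep_dvd (pow_ne_zero k (det_jacobianMatrix_ne_zero q))).subset ?_
  rintro x ⟨hx, l, hl⟩
  have hl0 : l ≠ 0 := fun h => x.rep_nonzero (by rw [hl, h, zero_pow (by lia)])
  rw [Set.mem_ofPred_eq, hl]
  exact pow_dvd_pow_of_dvd (dvd_det_jacobianMatrix_of_pow_mem_span hk hl0 (hl ▸ hx)) k

/-- for a complete intersection ideal generated by forms of degree `d ≥ 2`,
the set of points of `ℙ(I_d)` lying on the Veronese variety (i.e. classes of `d`-th powers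
of linear forms) is finite. -/
theorem stmt2 (m d : ℕ) (hd : 2 ≤ d)
    (q : Fin (m + 1) → MvPolynomial (Fin (m + 1)) ℂ)
    (hhom : ∀ i, (q i).IsHomogeneous d)
    (hci : ∀ p : Fin (m + 1) → ℂ, (∀ i, MvPolynomial.eval p (q i) = 0) → p = 0) :
    {x : Projectivization ℂ (MvPolynomial (Fin (m + 1)) ℂ) |
      x.rep ∈ Submodule.span ℂ (Set.range q) ∧
        ∃ z : Fin (m + 1) → ℂ, x.rep = linform z ^ d}.Finite := by
  refine (stmt2_general (fun _ => Nat.zero_lt_of_lt hd) hhom hci hd).subset ?_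
  exact fun x ⟨hx, z, hz⟩ => ⟨hx, linform z, hz⟩
end
end

section
/- Let $A = \mathbb{C}[x_0,\ldots,x_4]/I$ be an artinian complete intersection algebra with $I$ generated by $5$ quadrics (a regular sequence). Then $A$ has the Weak Lefschetz Property: for a general linear form $L \in A_1$ and every $k \geq 0$, the multiplication map $\mu_L : A_k \to A_{k+1}$ has maximal rank (injective or surjective). -/
open MvPolynomial

noncomputable section

/-- The degree-`k` graded piece of `ℂ[x₀,…,x_{n-1}]/I`. -/
def gradedPiece {n : ℕ} (I : Ideal (MvPolynomial (Fin n) ℂ)) (k : ℕ) :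
    Submodule ℂ (MvPolynomial (Fin n) ℂ ⧸ I) :=
  Submodule.map (Ideal.Quotient.mkₐ ℂ I).toLinearMap
    (MvPolynomial.homogeneousSubmodule (Fin n) ℂ k)

/-!
A complete intersection of quadrics remains a complete intersection when some of its members are
exchanged for general linear forms. Hence a nonzero class of degree `i < 5` is killed by at most
`i` independent linear forms, and the socle of `A` is a line in degree `5`. By duality it suffices
that a general linear form is injective on `A₂`; as this is the nonvanishing of a determinant, one
may extend the field by indeterminates `tᵢ` and take `L = ∑ tᵢ xᵢ`. The derivations of the large
field then give, for every linear form `M`, an additive derivation `D_M` of `A` with `D_M L = M`.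

Let `L f = 0` with `0 ≠ f ∈ A₂`. Differentiating gives `M f + L D_M f = 0` and `f D_M f = 0`.

* If `L` spans the linear forms killing `f`, a dimension count gives `ann₂ f = L A₁ + ⟨f⟩`, so
  `D_M f = L b(M) + c(M) f`. Differentiating once more and symmetrizing yields `b(M) f = 0`, so
  `b(M) ∈ ⟨L⟩` and `M f ∈ ⟨L³⟩` for all `M`, which is impossible.
* If `L` and `K` span them, the linear syzygies `L u + K v = 0` form a space of dimension at
  least `3`, and differentiating one of them gives `(u M + v D_M K) f = 0`. Products of nonzero
  elements of `⟨L, K⟩` are nonzero, so only the multiples of `(K, -L)` have both `u` and `v` in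
  `⟨L, K⟩`. An eigenvector of `M ↦ D_M K` modulo `⟨L, K⟩` provides `M` with `M ≡ s w` and
  `D_M K ≡ t w` for some linear form `w ∉ ⟨L, K⟩` and scalars `s`, `t`, not both zero. Then
  `(s u + t v) w f = 0` for all syzygies, and by dimension one of them, not a multiple of
  `(K, -L)`, has `s u + t v ∈ ⟨L, K⟩`. Such a relation forces `u, v ∈ ⟨L, K⟩`, a contradiction.
-/

namespace QuadricCI

section RegularFamilies

variable {A ι : Type*} [CommRing A] {I : Ideal A} {p q y z : A}

theorem isSMulRegular_quotient_iff :
    IsSMulRegular (A ⧸ I) y ↔ ∀ a, a * y ∈ I → a ∈ I := by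
  simp only [isSMulRegular_quotient_iff_mem_of_smul_mem, smul_eq_mul, mul_comm y]

theorem mem_span_singleton_sup_iff : p ∈ Ideal.span {y} ⊔ I ↔ ∃ a, p - a * y ∈ I := by
  rw [Ideal.mem_span_singleton_sup]
  constructor
  · rintro ⟨a, b, hb, rfl⟩
    exact ⟨a, by rwa [add_sub_cancel_left]⟩
  · rintro ⟨a, ha⟩
    exact ⟨a, _, ha, by ring⟩

theorem isSMulRegular_quotient_span_singleton_sup (hy : IsSMulRegular (A ⧸ I) y)
    (hz : IsSMulRegular (A ⧸ Ideal.span {y} ⊔ I) z) :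
    IsSMulRegular (A ⧸ Ideal.span {z} ⊔ I) y := by
  rw [isSMulRegular_quotient_iff] at hy hz ⊢
  intro a ha
  obtain ⟨b, hb⟩ := mem_span_singleton_sup_iff.1 ha
  have hbz : b * z ∈ Ideal.span {y} ⊔ I :=
    mem_span_singleton_sup_iff.2 ⟨a, by rwa [← neg_sub, neg_mem_iff]⟩
  obtain ⟨c, hc⟩ := mem_span_singleton_sup_iff.1 (hz b hbz)
  refine mem_span_singleton_sup_iff.2 ⟨c, hy _ ?_⟩
  rw [show (a - c * z) * y = (a * y - b * z) + z * (b - c * y) by ring]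
  exact add_mem hb (Ideal.mul_mem_left _ _ hc)

theorem isSMulRegular_quotient_of_pow_mem (hp : IsSMulRegular (A ⧸ I) p) {N : ℕ}
    (hN : p ^ N ∈ Ideal.span {y} ⊔ I) : IsSMulRegular (A ⧸ I) y := by
  obtain ⟨c, hc⟩ := mem_span_singleton_sup_iff.1 hN
  refine isSMulRegular_quotient_iff.2 fun a ha =>
    isSMulRegular_quotient_iff.1 (hp.pow N) a ?_
  rw [show a * p ^ N = a * (p ^ N - c * y) + c * (a * y) by ring]
  exact add_mem (Ideal.mul_mem_left _ _ hc) (Ideal.mul_mem_left _ _ ha)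

/-- A family that is a regular sequence in every order: each member is a nonzerodivisor modulo
any set of other members. -/
def IsRegularFamily (y : ι → A) : Prop :=
  ∀ T : Set ι, ∀ j ∉ T, IsSMulRegular (A ⧸ Ideal.span (y '' T)) (y j)

theorem span_image_insert (y : ι → A) (j : ι) (T : Set ι) :
    Ideal.span (y '' insert j T) = Ideal.span {y j} ⊔ Ideal.span (y '' T) := by
  rw [Set.image_insert_eq, Ideal.span_insert]

theorem IsRegularFamily.linearIndependent {k : Type*} [Field k] [Algebra k A] {y : ι → A}
    (h : IsRegularFamily y) (h1 : 1 ∉ Ideal.span (Set.range y)) : LinearIndependent k y := by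
  rw [linearIndependent_iff_notMem_span]
  intro j hj
  refine h1 (Ideal.span_mono (Set.image_subset_range _ _)
    (isSMulRegular_quotient_iff.1 (h (Set.univ \ {j}) j (by simp)) 1 ?_))
  rw [one_mul]
  exact Submodule.span_le_restrictScalars k A _ hj

end RegularFamilies

attribute [local instance] MvPolynomial.gradedAlgebra

section HomogeneousIdeals

variable {σ R : Type*} [CommRing R] {I : Ideal (MvPolynomial σ R)} {p y z : MvPolynomial σ R}
  {d e n : ℕ}

theorem homogeneousComponent_mul_of_le (hy : y.IsHomogeneous d) (h : d ≤ n)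
    (a : MvPolynomial σ R) :
    homogeneousComponent n (a * y) = homogeneousComponent (n - d) a * y := by
  rw [← decomposition.decompose'_apply, ← decomposition.decompose'_apply]
  exact DirectSum.coe_decompose_mul_of_right_mem_of_le (homogeneousSubmodule σ R) hy h

theorem homogeneousComponent_mul_of_lt (hy : y.IsHomogeneous d) (h : n < d)
    (a : MvPolynomial σ R) : homogeneousComponent n (a * y) = 0 := by
  rw [← decomposition.decompose'_apply]
  exact DirectSum.coe_decompose_mul_of_right_mem_of_not_le (homogeneousSubmodule σ R) hy
    (not_le.2 h)

theorem isHomogeneous_span_image {ι : Type*} {y : ι → MvPolynomial σ R} {d : ι → ℕ}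
    (hy : ∀ i, (y i).IsHomogeneous (d i)) (T : Set ι) :
    (Ideal.span (y '' T)).IsHomogeneous (homogeneousSubmodule σ R) :=
  Ideal.homogeneous_span _ _ (by rintro _ ⟨i, -, rfl⟩; exact ⟨_, hy i⟩)

theorem exists_isHomogeneous_sub_mul_mem (hI : I.IsHomogeneous (homogeneousSubmodule σ R))
    (hy : y.IsHomogeneous d) (hp : p.IsHomogeneous e) (h : p ∈ Ideal.span {y} ⊔ I) :
    ∃ b : MvPolynomial σ R, b.IsHomogeneous (e - d) ∧ p - b * y ∈ I ∧ (e < d → b = 0) := by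
  obtain ⟨a, ha⟩ := mem_span_singleton_sup_iff.1 h
  have hcomp := homogeneousComponent_mem_of_mem hI ha e
  rw [map_sub, homogeneousComponent_eq_self hp] at hcomp
  rcases le_or_gt d e with hde | hde
  · rw [homogeneousComponent_mul_of_le hy hde] at hcomp
    exact ⟨_, homogeneousComponent_isHomogeneous _ _, hcomp, fun h => absurd hde h.not_ge⟩
  · rw [homogeneousComponent_mul_of_lt hy hde] at hcomp
    exact ⟨0, isHomogeneous_zero _ _ _, by rwa [zero_mul], fun _ => rfl⟩

theorem isSMulRegular_quotient_of_span_singleton_sup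
    (hI : I.IsHomogeneous (homogeneousSubmodule σ R)) (hy : y.IsHomogeneous d)
    (hz : z.IsHomogeneous e) (he : 1 ≤ e) (hzI : IsSMulRegular (MvPolynomial σ R ⧸ I) z)
    (h : IsSMulRegular (MvPolynomial σ R ⧸ Ideal.span {z} ⊔ I) y) :
    IsSMulRegular (MvPolynomial σ R ⧸ I) y := by
  rw [isSMulRegular_quotient_iff] at hzI h ⊢
  have homogeneous_case : ∀ n, ∀ a : MvPolynomial σ R, a.IsHomogeneous n → a * y ∈ I → a ∈ I := by
    intro n
    induction n using Nat.strong_induction_on with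
    | _ n ih =>
    intro a han ha
    obtain ⟨b, hbh, hb, hb0⟩ :=
      exists_isHomogeneous_sub_mul_mem hI hz han (h a (Ideal.mem_sup_right ha))
    have hbI : b ∈ I := by
      rcases lt_or_ge n e with hn | hn
      · rw [hb0 hn]
        exact zero_mem _
      · refine ih (n - e) (by lia) b hbh (hzI _ ?_)
        rw [show b * y * z = a * y - y * (a - b * z) by ring]
        exact sub_mem ha (Ideal.mul_mem_left _ _ hb)
    rw [show a = (a - b * z) + z * b by ring]
    exact add_mem hb (Ideal.mul_mem_left _ _ hbI)
  refine fun a ha => (mem_iff_homogeneousComponent_mem hI a).2 fun n =>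
    homogeneous_case n _ (homogeneousComponent_isHomogeneous _ _) ?_
  have hcomp := homogeneousComponent_mem_of_mem hI ha (n + d)
  rwa [homogeneousComponent_mul_of_le hy (Nat.le_add_left d n), Nat.add_sub_cancel] at hcomp

theorem IsRegularFamily.isSMulRegular_of_exchange {ι : Type*} [Finite ι]
    {y y' : ι → MvPolynomial σ R} {d : ι → ℕ} (hy : ∀ i, (y i).IsHomogeneous (d i))
    (hd : ∀ i, 1 ≤ d i) {i₀ : ι} (hyy : Set.EqOn y' y {i₀}ᶜ) (hreg : IsRegularFamily y') {N : ℕ}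
    (hN : y' i₀ ^ N ∈ Ideal.span (Set.range y)) (T : Set ι) (hT : i₀ ∉ T) :
    IsSMulRegular (MvPolynomial σ R ⧸ Ideal.span (y '' T)) (y i₀) := by
  induction T using WellFoundedGT.induction with
  | ind T ih =>
  have himg : y' '' T = y '' T := (hyy.mono (Set.subset_compl_singleton_iff.2 hT)).image_eq
  by_cases hall : insert i₀ T = Set.univ
  · rw [← Set.image_univ, ← hall, span_image_insert, ← himg] at hN
    rw [← himg]
    exact isSMulRegular_quotient_of_pow_mem (hreg T i₀ hT) hN
  · obtain ⟨j, hj⟩ := (Set.ne_univ_iff_exists_notMem _).1 hall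
    obtain ⟨hji, hjT⟩ := not_or.1 hj
    have hjreg := hreg T j hjT
    rw [himg, hyy hji] at hjreg
    refine isSMulRegular_quotient_of_span_singleton_sup (isHomogeneous_span_image hy T) (hy i₀)
      (hy j) (hd j) hjreg ?_
    rw [← span_image_insert]
    exact ih _ (Set.ssubset_insert hjT) (not_or.2 ⟨Ne.symm hji, hT⟩)

theorem IsRegularFamily.of_exchange {ι : Type*} [Finite ι]
    {y y' : ι → MvPolynomial σ R} {d : ι → ℕ} (hy : ∀ i, (y i).IsHomogeneous (d i))
    (hd : ∀ i, 1 ≤ d i) {i₀ : ι} (hyy : Set.EqOn y' y {i₀}ᶜ) (hreg : IsRegularFamily y') {N : ℕ}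
    (hN : y' i₀ ^ N ∈ Ideal.span (Set.range y)) : IsRegularFamily y := by
  have hreg₀ := hreg.isSMulRegular_of_exchange hy hd hyy hN
  have hreg' (T : Set ι) (hT : i₀ ∉ T) (j : ι) (hj : j ∉ T) :
      IsSMulRegular (MvPolynomial σ R ⧸ Ideal.span (y '' T)) (y j) := by
    rcases eq_or_ne j i₀ with rfl | hji
    · exact hreg₀ T hT
    · rw [← (hyy.mono (Set.subset_compl_singleton_iff.2 hT)).image_eq, ← hyy hji]
      exact hreg T j hj
  intro T j hj
  by_cases hi : i₀ ∈ T
  · obtain ⟨T₀, hT₀, rfl⟩ : ∃ T₀ : Set ι, i₀ ∉ T₀ ∧ insert i₀ T₀ = T :=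
      ⟨T \ {i₀}, by simp, by simp [hi]⟩
    obtain ⟨hji, hjT₀⟩ := not_or.1 hj
    rw [span_image_insert]
    refine isSMulRegular_quotient_span_singleton_sup (hreg' T₀ hT₀ j hjT₀) ?_
    rw [← span_image_insert]
    exact hreg₀ _ (not_or.2 ⟨Ne.symm hji, hT₀⟩)
  · exact hreg' T hi j hj

theorem isRegularFamily_X : IsRegularFamily (X : σ → MvPolynomial σ R) := by
  classical
  intro T j hj
  refine isSMulRegular_quotient_iff.2 fun a ha => ?_
  rw [mem_ideal_span_X_image] at ha ⊢
  intro m hm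
  obtain ⟨i, hi, hmi⟩ := ha (m + Finsupp.single j 1) (by
    rw [mem_support_iff] at hm ⊢
    rwa [coeff_mul_X])
  have hji : j ≠ i := fun h => hj (h ▸ hi)
  exact ⟨i, hi, by simpa [Finsupp.single_apply, hji] using hmi⟩

end HomogeneousIdeals

section LinearForms

variable {n R : Type*} [Fintype n] [CommRing R]

/-- The linear form with a given coefficient vector. -/
def lin : (n → R) →ₗ[R] MvPolynomial n R :=
  Fintype.linearCombination R X

theorem lin_apply (c : n → R) : lin c = ∑ i, C (c i) * X i := by
  simp only [lin, Fintype.linearCombination_apply, smul_eq_C_mul]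

theorem range_lin : LinearMap.range (lin : (n → R) →ₗ[R] _) = homogeneousSubmodule n R 1 := by
  rw [lin, Fintype.range_linearCombination, homogeneousSubmodule_one_eq_span_X]

theorem isHomogeneous_lin (c : n → R) : (lin c).IsHomogeneous 1 :=
  range_lin.le (LinearMap.mem_range_self lin c)

theorem exists_lin_eq {l : MvPolynomial n R} (hl : l.IsHomogeneous 1) : ∃ c, lin c = l :=
  range_lin.ge hl

theorem eval_lin (c p : n → R) : eval p (lin c) = c ⬝ᵥ p := by
  simp [lin_apply, dotProduct]

theorem lin_single [DecidableEq n] (i : n) : lin (Pi.single i (1 : R)) = X i := by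
  rw [lin, Fintype.linearCombination_apply_single, one_smul]

theorem eval_aeval_lin {m : Type*} (G : Matrix m n R) (v : n → R) (p : MvPolynomial m R) :
    eval v (aeval (fun i => lin (G i)) p) = eval (G.mulVec v) p := by
  have h : (aeval v).comp (aeval fun i => lin (G i)) = aeval (R := R) (G.mulVec v) :=
    algHom_ext fun i => by
      simp only [AlgHom.comp_apply, aeval_X, aeval_eq_eval, Matrix.mulVec]
      exact eval_lin (G i) v
  exact DFunLike.congr_fun h p

theorem aeval_lin_lin {m : Type*} [Fintype m] (G : Matrix m n R) (c : m → R) :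
    aeval (fun i => lin (G i)) (lin c) = lin (Matrix.vecMul c G) := by
  rw [Matrix.vecMul_eq_sum, map_sum, show lin c = ∑ i, c i • X i from
    Fintype.linearCombination_apply .., map_sum]
  simp only [map_smul, aeval_X]

theorem aeval_lin_comp_aeval_lin [DecidableEq n] {M N : Matrix n n R} (h : N * M = 1) :
    (aeval fun i => lin (M i)).comp (aeval fun i => lin (N i)) =
      AlgHom.id R (MvPolynomial n R) :=
  algHom_ext fun i => by
    have hrow : Matrix.vecMul (N i) M = Pi.single i 1 := by
      rw [← Matrix.mul_apply_eq_vecMul, h]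
      exact funext fun _ => Matrix.one_eq_pi_single
    rw [AlgHom.comp_apply, aeval_X, aeval_lin_lin, hrow, AlgHom.id_apply, lin_single]

end LinearForms

section Nullstellensatz

variable {σ k : Type*} [Field k]

theorem eval_smul_of_isHomogeneous {y : MvPolynomial σ k} {d : ℕ} (hy : y.IsHomogeneous d)
    (r : k) (p : σ → k) : eval (r • p) y = r ^ d * eval p y := by
  rw [eval_eq, eval_eq, Finset.mul_sum]
  refine Finset.sum_congr rfl fun m hm => ?_
  have hm : ∑ i ∈ m.support, m i = d := by
    rw [← hy (mem_support_iff.1 hm), Finsupp.weight_apply, Finsupp.sum]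
    simp only [Pi.one_apply, smul_eq_mul, mul_one]
  simp only [Pi.smul_apply, smul_eq_mul, mul_pow, Finset.prod_mul_distrib,
    Finset.prod_pow_eq_pow_sum, hm]
  ring

theorem eval_zero_of_isHomogeneous {y : MvPolynomial σ k} {d : ℕ} (hy : y.IsHomogeneous d)
    (hd : 1 ≤ d) : eval 0 y = 0 := by
  simpa [zero_pow (Nat.one_le_iff_ne_zero.1 hd)] using eval_smul_of_isHomogeneous hy 0 0

theorem mem_span_X_pow_of_isHomogeneous {p : MvPolynomial σ k} {e : ℕ} (hp : p.IsHomogeneous e) :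
    p ∈ Ideal.span (Set.range (X : σ → MvPolynomial σ k)) ^ e := by
  rw [Ideal.mem_span_pow_iff_exists_isHomogeneous]
  exact ⟨map C p, hp.map _, by rw [eval_map, eval₂_eta]⟩

theorem mem_span_X_of_isHomogeneous {p : MvPolynomial σ k} {e : ℕ} (hp : p.IsHomogeneous e)
    (he : e ≠ 0) : p ∈ Ideal.span (Set.range (X : σ → MvPolynomial σ k)) :=
  Ideal.pow_le_self he (mem_span_X_pow_of_isHomogeneous hp)

theorem exists_forall_isHomogeneous_mem [IsAlgClosed k] [Finite σ] {ι : Type*}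
    {y : ι → MvPolynomial σ k} (h0 : ∀ p : σ → k, (∀ i, eval p (y i) = 0) → p = 0) :
    ∃ N, ∀ e, N ≤ e → ∀ p : MvPolynomial σ k, p.IsHomogeneous e →
      p ∈ Ideal.span (Set.range y) := by
  have hle : Ideal.span (Set.range (X : σ → MvPolynomial σ k)) ≤
      (Ideal.span (Set.range y)).radical := by
    rw [← vanishingIdeal_zeroLocus_eq_radical (K := k), Ideal.span_le]
    rintro _ ⟨j, rfl⟩
    simp only [SetLike.mem_coe, mem_vanishingIdeal_iff, zeroLocus_span]
    intro x hx
    have hx0 : x = 0 := h0 x fun i => by simpa [aeval_eq_eval] using hx (y i) ⟨i, rfl⟩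
    simp [hx0]
  obtain ⟨N, hN⟩ := Ideal.exists_pow_le_of_le_radical_of_fg hle (IsNoetherian.noetherian _)
  exact ⟨N, fun e he p hp => hN (Ideal.pow_le_pow_right he (mem_span_X_pow_of_isHomogeneous hp))⟩

theorem finite_zeroLocus (J : Ideal (MvPolynomial σ k)) [Module.Finite k (MvPolynomial σ k ⧸ J)] :
    (zeroLocus k J).Finite := by
  have hinj : Function.Injective fun p : zeroLocus k J =>
      Ideal.Quotient.liftₐ J (aeval (p : σ → k)) fun a ha => p.2 a ha := fun p p' h => by
    ext j
    have hj : aeval (p : σ → k) (X j : MvPolynomial σ k) = aeval (p' : σ → k) (X j) :=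
      DFunLike.congr_fun h (Ideal.Quotient.mk J (X j))
    rwa [aeval_X, aeval_X] at hj
  exact Set.finite_coe_iff.1 (Finite.of_injective _ hinj)

theorem finite_quotient_of_forall_isHomogeneous_mem [Finite σ] {I : Ideal (MvPolynomial σ k)}
    {y : MvPolynomial σ k} {d N : ℕ} (hI : I.IsHomogeneous (homogeneousSubmodule σ k))
    (hy : y.IsHomogeneous d) (hd : 1 ≤ d)
    (hN : ∀ e, N ≤ e → ∀ p : MvPolynomial σ k, p.IsHomogeneous e → p ∈ Ideal.span {y} ⊔ I) :
    Module.Finite k (MvPolynomial σ k ⧸ Ideal.span {y - 1} ⊔ I) := by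
  set J := Ideal.span {y - 1} ⊔ I
  set V : Submodule k (MvPolynomial σ k ⧸ J) :=
    ⨆ e : Fin N, (homogeneousSubmodule σ k e).map (Ideal.Quotient.mkₐ k J).toLinearMap
  have mk_mem (e : ℕ) : ∀ p : MvPolynomial σ k, p.IsHomogeneous e →
      Ideal.Quotient.mkₐ k J p ∈ V := by
    induction e using Nat.strong_induction_on with
    | _ e ih =>
    intro p hp
    rcases lt_or_ge e N with h | h
    · exact Submodule.mem_iSup_of_mem (⟨e, h⟩ : Fin N) ⟨p, hp, rfl⟩
    · obtain ⟨b, hbh, hb, hb0⟩ := exists_isHomogeneous_sub_mul_mem hI hy hp (hN e h p hp)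
      have hpb : Ideal.Quotient.mkₐ k J p = Ideal.Quotient.mkₐ k J b := by
        rw [Ideal.Quotient.mkₐ_eq_mk, Ideal.Quotient.eq]
        exact mem_span_singleton_sup_iff.2
          ⟨b, by rwa [show p - b - b * (y - 1) = p - b * y by ring]⟩
      rw [hpb]
      rcases lt_or_ge e d with hed | hed
      · rw [hb0 hed, map_zero]
        exact zero_mem _
      · exact ih _ (by lia) b hbh
  have htop : V = ⊤ := by
    rw [eq_top_iff]
    rintro x -
    obtain ⟨p, rfl⟩ := Ideal.Quotient.mkₐ_surjective k J x
    rw [← sum_homogeneousComponent p, map_sum]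
    exact Submodule.sum_mem _ fun i _ => mk_mem i _ (homogeneousComponent_isHomogeneous _ _)
  exact ⟨htop ▸ Submodule.fg_iSup _ fun e => (homogeneousSubmodule_fg σ k e).map _⟩

theorem range_eq_image_insert_compl {ι α : Type*} (y : ι → α) (i : ι) :
    Set.range y = y '' insert i {i}ᶜ := by
  rw [← Set.image_univ, Set.insert_eq, Set.union_compl_self]

variable [IsAlgClosed k] {ι : Type*}

theorem finite_setOf_eval_eq_one [Finite σ] {y : ι → MvPolynomial σ k} {d : ι → ℕ}
    (hy : ∀ i, (y i).IsHomogeneous (d i)) {i₀ : ι} (hd : 1 ≤ d i₀)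
    (h0 : ∀ p : σ → k, (∀ i, eval p (y i) = 0) → p = 0) :
    {p : σ → k | (∀ i ≠ i₀, eval p (y i) = 0) ∧ eval p (y i₀) = 1}.Finite := by
  obtain ⟨N, hN⟩ := exists_forall_isHomogeneous_mem h0
  rw [range_eq_image_insert_compl y i₀, span_image_insert] at hN
  have := finite_quotient_of_forall_isHomogeneous_mem
    (isHomogeneous_span_image hy {i₀}ᶜ) (hy i₀) hd hN
  refine (finite_zeroLocus (Ideal.span {y i₀ - 1} ⊔ Ideal.span (y '' {i₀}ᶜ))).subset ?_
  rintro p ⟨hp, hp1⟩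
  rw [← Ideal.span_union, zeroLocus_span]
  rintro _ (rfl | ⟨i, hi, rfl⟩)
  · simp [aeval_eq_eval, hp1]
  · simpa [aeval_eq_eval] using hp i hi

theorem exists_linear_exchange [Fintype σ] {y : ι → MvPolynomial σ k} {d : ι → ℕ}
    (hy : ∀ i, (y i).IsHomogeneous (d i)) {i₀ : ι} (hd : 1 ≤ d i₀)
    (h0 : ∀ p : σ → k, (∀ i, eval p (y i) = 0) → p = 0) :
    ∃ c : σ → k, ∀ p : σ → k, (∀ i ≠ i₀, eval p (y i) = 0) → eval p (lin c) = 0 → p = 0 := by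
  classical
  set Z : Set (σ → k) := {p | (∀ i ≠ i₀, eval p (y i) = 0) ∧ eval p (y i₀) = 1}
  have : Finite Z := finite_setOf_eval_eq_one hy hd h0
  have : Infinite k := IsAlgClosed.instInfinite
  have hZ : ∀ p : Z, (p : σ → k) ≠ 0 := fun p hp => by
    have h1 := p.2.2
    rw [hp, eval_zero_of_isHomogeneous (hy i₀) hd] at h1
    exact zero_ne_one h1
  obtain ⟨φ, hφ⟩ := Module.exists_dual_forall_apply_ne_zero (K := k) (fun p : Z => (p : σ → k)) hZ
  obtain ⟨c, rfl⟩ := (dotProductEquiv k σ).surjective φ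
  refine ⟨c, fun p hp hlp => ?_⟩
  rw [eval_lin, ← dotProductEquiv_apply_apply] at hlp
  by_contra hp0
  have hc : eval p (y i₀) ≠ 0 := fun hc => hp0 <| h0 p fun i => by
    rcases eq_or_ne i i₀ with rfl | hi
    exacts [hc, hp i hi]
  obtain ⟨r, hr⟩ := IsAlgClosed.exists_pow_nat_eq (eval p (y i₀))⁻¹ hd
  refine hφ ⟨r • p, fun i hi => ?_, ?_⟩ (by rw [map_smul, hlp, smul_zero])
  · rw [eval_smul_of_isHomogeneous (hy i), hp i hi, mul_zero]
  · rw [eval_smul_of_isHomogeneous (hy i₀), hr, inv_mul_cancel₀ hc]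

end Nullstellensatz

section Socle

variable {σ k : Type*} [Field k] {I R : Ideal (MvPolynomial σ k)}
  {a l p z : MvPolynomial σ k} {d e i s : ℕ}

/-- The socle of the graded ring `k[X] / I` is simple and lives in degree `s`: the homogeneous
elements killed by all variables vanish outside degree `s` and span at most a line in
degree `s`. -/
structure HasSimpleSocle (I : Ideal (MvPolynomial σ k)) (s : ℕ) : Prop where
  mem_of_forall_X_mul_mem {i : ℕ} {a : MvPolynomial σ k} :
    a.IsHomogeneous i → i ≠ s → (∀ j, X j * a ∈ I) → a ∈ I
  exists_smul_add_smul_mem {a b : MvPolynomial σ k} :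
    a.IsHomogeneous s → b.IsHomogeneous s → (∀ j, X j * a ∈ I) → (∀ j, X j * b ∈ I) →
      ∃ α β : k, (α ≠ 0 ∨ β ≠ 0) ∧ α • a + β • b ∈ I

theorem isHomogeneous_X_mul (ha : a.IsHomogeneous e) (j : σ) : (X j * a).IsHomogeneous (e + 1) :=
  add_comm 1 e ▸ (isHomogeneous_X k j).mul ha

theorem mul_mem_of_forall_X_mul_mem (hl : l.IsHomogeneous 1) (ha : ∀ j, X j * a ∈ I) :
    l * a ∈ I := by
  have hle : Ideal.span (Set.range X) ≤ I.colon {a} :=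
    Ideal.span_le.2 (Set.range_subset_iff.2 fun j => Submodule.mem_colon_singleton.2 (ha j))
  exact Submodule.mem_colon_singleton.1 (hle (mem_span_X_of_isHomogeneous hl one_ne_zero))

theorem mem_span_singleton_sup_of_mul_sub_mul_mem {A : Type*} [CommRing A] {R : Ideal A}
    {a b l z : A} (hl : IsSMulRegular (A ⧸ R) l) (hb : b ∈ Ideal.span {l} ⊔ R)
    (hab : l * a - b * z ∈ R) : a ∈ Ideal.span {z} ⊔ R := by
  obtain ⟨c, hc⟩ := mem_span_singleton_sup_iff.1 hb
  refine mem_span_singleton_sup_iff.2 ⟨c, isSMulRegular_quotient_iff.1 hl _ ?_⟩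
  rw [show (a - c * z) * l = (l * a - b * z) + z * (b - c * l) by ring]
  exact add_mem hab (Ideal.mul_mem_left _ _ hc)

theorem exists_mul_sub_mul_mem (hR : R.IsHomogeneous (homogeneousSubmodule σ k))
    (hz : z.IsHomogeneous d) (hl : l.IsHomogeneous 1)
    (hzR : IsSMulRegular (MvPolynomial σ k ⧸ R) z) (ha : a.IsHomogeneous i)
    (hX : ∀ j, X j * a ∈ Ideal.span {z} ⊔ R) :
    ∃ b : MvPolynomial σ k, b.IsHomogeneous (i + 1 - d) ∧ l * a - b * z ∈ R ∧
      (i + 1 < d → b = 0) ∧ ∀ j, X j * b ∈ Ideal.span {l} ⊔ R := by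
  obtain ⟨b, hbh, hb, hb0⟩ := exists_isHomogeneous_sub_mul_mem hR hz
    (add_comm 1 i ▸ hl.mul ha) (mul_mem_of_forall_X_mul_mem hl hX)
  refine ⟨b, hbh, hb, hb0, fun j => ?_⟩
  refine mem_span_singleton_sup_of_mul_sub_mul_mem hzR (hX j) ?_
  rw [show z * (X j * b) - X j * a * l = -(X j * (l * a - b * z)) by ring]
  exact neg_mem (Ideal.mul_mem_left _ _ hb)

-- Modulo `R`, multiplication by `l` followed by division by `z` embeds the socle of `(z) ⊔ R`
-- into that of `(l) ⊔ R`.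
theorem HasSimpleSocle.exchange (hR : R.IsHomogeneous (homogeneousSubmodule σ k))
    (hz : z.IsHomogeneous d) (hd : 1 ≤ d) (hl : l.IsHomogeneous 1)
    (hzR : IsSMulRegular (MvPolynomial σ k ⧸ R) z) (hlR : IsSMulRegular (MvPolynomial σ k ⧸ R) l)
    (h : HasSimpleSocle (Ideal.span {l} ⊔ R) s) :
    HasSimpleSocle (Ideal.span {z} ⊔ R) (s + (d - 1)) where
  mem_of_forall_X_mul_mem {i} a ha hi hX := by
    obtain ⟨b, hbh, hb, hb0, hbX⟩ := exists_mul_sub_mul_mem hR hz hl hzR ha hX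
    refine mem_span_singleton_sup_of_mul_sub_mul_mem hlR ?_ hb
    rcases lt_or_ge (i + 1) d with hid | hid
    · rw [hb0 hid]
      exact zero_mem _
    · exact h.mem_of_forall_X_mul_mem hbh (by lia) hbX
  exists_smul_add_smul_mem {a a'} ha ha' hX hX' := by
    obtain ⟨b, hbh, hb, -, hbX⟩ := exists_mul_sub_mul_mem hR hz hl hzR ha hX
    obtain ⟨b', hbh', hb', -, hbX'⟩ := exists_mul_sub_mul_mem hR hz hl hzR ha' hX'
    rw [show s + (d - 1) + 1 - d = s by lia] at hbh hbh'
    obtain ⟨α, β, hne, hmem⟩ := h.exists_smul_add_smul_mem hbh hbh' hbX hbX'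
    refine ⟨α, β, hne, mem_span_singleton_sup_of_mul_sub_mul_mem hlR hmem ?_⟩
    simp only [smul_eq_C_mul]
    rw [show l * (C α * a + C β * a') - (C α * b + C β * b') * z =
      C α * (l * a - b * z) + C β * (l * a' - b' * z) by ring]
    exact add_mem (Ideal.mul_mem_left _ _ hb) (Ideal.mul_mem_left _ _ hb')

theorem HasSimpleSocle.of_exchange {ι : Type*} {y y' : ι → MvPolynomial σ k} {d : ι → ℕ} {i₀ : ι}
    (hy : ∀ i, (y i).IsHomogeneous (d i)) (hd : 1 ≤ d i₀) (hl : (y' i₀).IsHomogeneous 1)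
    (hyy : Set.EqOn y' y {i₀}ᶜ) (hreg : IsRegularFamily y) (hreg' : IsRegularFamily y')
    (h : HasSimpleSocle (Ideal.span (Set.range y')) s) :
    HasSimpleSocle (Ideal.span (Set.range y)) (s + (d i₀ - 1)) := by
  have hl' := hreg' {i₀}ᶜ i₀ (by simp)
  rw [range_eq_image_insert_compl y' i₀, span_image_insert] at h
  rw [hyy.image_eq] at h hl'
  rw [range_eq_image_insert_compl y i₀, span_image_insert]
  exact h.exchange (isHomogeneous_span_image hy _) (hy i₀) hd hl (hreg _ i₀ (by simp)) hl'

theorem hasSimpleSocle_span_X : HasSimpleSocle (Ideal.span (Set.range (X : σ → MvPolynomial σ k))) 0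
    where
  mem_of_forall_X_mul_mem ha hi _ := mem_span_X_of_isHomogeneous ha hi
  exists_smul_add_smul_mem {a b} ha hb _ _ := by
    have exists_eq_C {p : MvPolynomial σ k} (hp : p.IsHomogeneous 0) : ∃ α, p = C α :=
      ⟨_, totalDegree_eq_zero_iff_eq_C.1 ((totalDegree_zero_iff_isHomogeneous _).2 hp)⟩
    obtain ⟨α, rfl⟩ := exists_eq_C ha
    obtain ⟨β, rfl⟩ := exists_eq_C hb
    rcases eq_or_ne α 0 with rfl | hα
    · exact ⟨1, 0, Or.inl one_ne_zero, by simp⟩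
    · refine ⟨-β, α, Or.inr hα, ?_⟩
      rw [smul_eq_C_mul, smul_eq_C_mul, ← C_mul, ← C_mul, ← C_add,
        show -β * α + α * β = 0 by ring, C_0]
      exact zero_mem _

theorem HasSimpleSocle.mem_of_lt (h : HasSimpleSocle I s)
    (hI : ∃ N, ∀ e, N ≤ e → ∀ p : MvPolynomial σ k, p.IsHomogeneous e → p ∈ I) (he : s < e)
    (hp : p.IsHomogeneous e) : p ∈ I := by
  obtain ⟨N, hN⟩ := hI
  induction hm : N - e generalizing e p with
  | zero => exact hN e (by lia) p hp
  | succ m ih =>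
    exact h.mem_of_forall_X_mul_mem hp he.ne' fun j =>
      ih (by lia) (isHomogeneous_X_mul hp j) (by lia)

theorem HasSimpleSocle.exists_mul_notMem (h : HasSimpleSocle I s) (hi : i ≤ s)
    (ha : a.IsHomogeneous i) (haI : a ∉ I) :
    ∃ b : MvPolynomial σ k, b.IsHomogeneous (s - i) ∧ b * a ∉ I := by
  induction hm : s - i generalizing i a with
  | zero => exact ⟨1, isHomogeneous_one _ _, by rwa [one_mul]⟩
  | succ m ih =>
    obtain ⟨j, hj⟩ : ∃ j, X j * a ∉ I := by
      by_contra! hX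
      exact haI (h.mem_of_forall_X_mul_mem ha (by lia) hX)
    obtain ⟨b, hb, hba⟩ := ih (by lia) (isHomogeneous_X_mul ha j) hj (by lia)
    exact ⟨b * X j, hb.mul (isHomogeneous_X k j), by rwa [mul_assoc]⟩

end Socle

section CompleteIntersections

theorem IsRegularFamily.map_equiv {A B ι : Type*} [CommRing A] [CommRing B] {y : ι → A}
    (h : IsRegularFamily y) (φ : A ≃+* B) : IsRegularFamily (φ ∘ y) := fun T j hj => by
  refine isSMulRegular_quotient_iff.2 fun a ha => ?_
  rw [Set.image_comp, ← Ideal.map_span, Ideal.mem_map_of_equiv] at ha ⊢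
  obtain ⟨x, hx, hxa⟩ := ha
  refine ⟨φ.symm a, isSMulRegular_quotient_iff.1 (h T j hj) _ ?_, φ.apply_symm_apply a⟩
  rwa [← φ.symm_apply_apply (y j), ← map_mul, ← Function.comp_apply (f := φ), ← hxa,
    φ.symm_apply_apply]

variable {n k : Type*} [Field k]

theorem isRegularFamily_and_hasSimpleSocle_of_linear [Finite n] {y : n → MvPolynomial n k}
    (hy : ∀ i, (y i).IsHomogeneous 1)
    (h0 : ∀ p : n → k, (∀ i, eval p (y i) = 0) → p = 0) :
    IsRegularFamily y ∧ HasSimpleSocle (Ideal.span (Set.range y)) 0 := by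
  classical
  have := Fintype.ofFinite n
  choose c hc using fun i => exists_lin_eq (hy i)
  set M : Matrix n n k := Matrix.of c
  have hdet : IsUnit M.det := by
    refine (Matrix.isUnit_iff_isUnit_det _).1 (Matrix.mulVec_injective_iff_isUnit.1 ?_)
    refine (injective_iff_map_eq_zero M.mulVecLin).2 fun p hp => h0 p fun i => ?_
    rw [← hc, eval_lin]
    exact congrFun hp i
  let φ : MvPolynomial n k ≃ₐ[k] MvPolynomial n k := AlgEquiv.ofAlgHom
    (aeval fun i => lin (M i)) (aeval fun i => lin (M⁻¹ i))
    (aeval_lin_comp_aeval_lin (Matrix.nonsing_inv_mul _ hdet))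
    (aeval_lin_comp_aeval_lin (Matrix.mul_nonsing_inv _ hdet))
  have hφ : y = φ ∘ X := funext fun i => by
    rw [Function.comp_apply, AlgEquiv.ofAlgHom_apply, aeval_X, ← hc i]
    rfl
  have hspan : Ideal.span (Set.range y) = Ideal.span (Set.range X) := by
    refine le_antisymm (Ideal.span_le.2 (Set.range_subset_iff.2 fun i => ?_))
      (Ideal.span_le.2 (Set.range_subset_iff.2 fun j => ?_))
    · exact mem_span_X_of_isHomogeneous (hy i) one_ne_zero
    · have hX : (φ.symm (X j)).IsHomogeneous 1 := by
        rw [AlgEquiv.ofAlgHom_symm, AlgEquiv.ofAlgHom_apply, aeval_X]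
        exact isHomogeneous_lin _
      rw [hφ, Set.range_comp, ← Ideal.map_span, SetLike.mem_coe, ← φ.apply_symm_apply (X j)]
      exact Ideal.mem_map_of_mem φ (mem_span_X_of_isHomogeneous hX one_ne_zero)
  exact ⟨hφ ▸ isRegularFamily_X.map_equiv φ.toRingEquiv, hspan ▸ hasSimpleSocle_span_X⟩

variable [IsAlgClosed k] [Fintype n]

theorem isRegularFamily_and_hasSimpleSocle {y : n → MvPolynomial n k} {d : n → ℕ}
    (hy : ∀ i, (y i).IsHomogeneous (d i)) (hd : ∀ i, 1 ≤ d i)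
    (h0 : ∀ p : n → k, (∀ i, eval p (y i) = 0) → p = 0) :
    IsRegularFamily y ∧ HasSimpleSocle (Ideal.span (Set.range y)) (∑ i, (d i - 1)) := by
  classical
  induction hs : ∑ i, (d i - 1) using Nat.strong_induction_on generalizing y d with
  | _ s ih =>
  by_cases hlin : ∀ i, d i = 1
  · obtain rfl : s = 0 := by simp [← hs, hlin]
    exact isRegularFamily_and_hasSimpleSocle_of_linear (fun i => hlin i ▸ hy i) h0
  push Not at hlin
  obtain ⟨i₀, hi₀⟩ := hlin
  have hdi₀ := hd i₀
  obtain ⟨c, hc⟩ := exists_linear_exchange hy (hd i₀) h0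
  obtain ⟨y', hy'i₀, hyy⟩ : ∃ y' : n → MvPolynomial n k, y' i₀ = lin c ∧ Set.EqOn y' y {i₀}ᶜ :=
    ⟨Function.update y i₀ (lin c), by simp, fun i hi => Function.update_of_ne hi _ _⟩
  have hsum : ∑ i, (Function.update d i₀ 1 i - 1) + (d i₀ - 1) = s := by
    rw [← hs, Fintype.sum_eq_add_sum_compl i₀, Fintype.sum_eq_add_sum_compl i₀ (fun i => d i - 1),
      Finset.sum_congr rfl (g := fun i => d i - 1) fun i hi => by
        rw [Function.update_of_ne (by simpa using hi)]]
    simp [add_comm]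
  have hy' (i : n) : (y' i).IsHomogeneous (Function.update d i₀ 1 i) := by
    rcases eq_or_ne i i₀ with rfl | hi
    · simpa [hy'i₀] using isHomogeneous_lin c
    · simpa [hyy hi, hi] using hy i
  have hd' (i : n) : 1 ≤ Function.update d i₀ 1 i := by
    rcases eq_or_ne i i₀ with rfl | hi
    · simp
    · simpa [hi] using hd i
  obtain ⟨hreg', hsoc'⟩ := ih _ (by lia) hy' hd'
    (fun p hp => hc p (fun i hi => hyy hi ▸ hp i) (hy'i₀ ▸ hp i₀)) rfl
  obtain ⟨N, hN⟩ := exists_forall_isHomogeneous_mem h0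
  have hreg : IsRegularFamily y := hreg'.of_exchange hy hd hyy (N := N)
    (hN N le_rfl _ (by simpa [hy'i₀] using (isHomogeneous_lin c).pow N))
  exact ⟨hreg, hsum ▸ hsoc'.of_exchange hy (hd i₀) (hy'i₀ ▸ isHomogeneous_lin c) hyy hreg hreg'⟩

end CompleteIntersections

section LinearSections

variable {ι k : Type*} [Field k] {m r d e : ℕ}

theorem exists_forall_eval_ne [Infinite k] {σ : Type*} [Fintype ι] [Fintype σ]
    (u : ι → MvPolynomial σ k) (h : Fintype.card σ < Fintype.card ι) :
    ∃ w : ι → k, ∀ v : σ → k, (fun i => eval v (u i)) ≠ w := by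
  have hdep : ¬ AlgebraicIndependent k u := fun hu => by
    have hcard := hu.lift_cardinalMk_le_trdeg
    rw [MvPolynomial.trdeg_of_isDomain] at hcard
    simp only [Cardinal.mk_fintype, Cardinal.lift_natCast, Nat.cast_le] at hcard
    exact absurd h hcard.not_gt
  rw [algebraicIndependent_iff] at hdep
  push Not at hdep
  obtain ⟨F, hF, hF0⟩ := hdep
  obtain ⟨w, hw⟩ : ∃ w, eval w F ≠ 0 := by
    by_contra! hw
    exact hF0 (MvPolynomial.funext fun x => by rw [hw x, map_zero])
  refine ⟨w, fun v hv => hw ?_⟩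
  rw [← hv, ← aeval_eq_eval, ← map_zero (eval v), ← hF, ← aeval_eq_eval, ← AlgHom.comp_apply,
    comp_aeval]

theorem exists_mulVec_eq_zero_imp_mem_span {w : Fin (m + 1) → k} (hw : w ≠ 0) :
    ∃ P : Matrix (Fin m) (Fin (m + 1)) k, ∀ x, P.mulVec x = 0 → x ∈ k ∙ w := by
  have hrank : Module.finrank k ((Fin (m + 1) → k) ⧸ k ∙ w) = Module.finrank k (Fin m → k) := by
    have hsum := Submodule.finrank_quotient_add_finrank (k ∙ w)
    rw [finrank_span_singleton hw, Module.finrank_fin_fun] at hsum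
    rw [Module.finrank_fin_fun]
    lia
  let π := (LinearEquiv.ofFinrankEq _ _ hrank).toLinearMap ∘ₗ (k ∙ w).mkQ
  refine ⟨LinearMap.toMatrix' π, fun x hx => ?_⟩
  rw [LinearMap.toMatrix'_mulVec] at hx
  exact (Submodule.Quotient.mk_eq_zero _).1 ((LinearEquiv.map_eq_zero_iff _).1 hx)

theorem exists_mulVec_parametrization {n : Type*} [Fintype n] {c : Fin e → n → k}
    (her : e + r = Fintype.card n)
    (hc : LinearIndependent k c) :
    ∃ G : Matrix n (Fin r) k, (∀ v, G.mulVec v = 0 → v = 0) ∧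
      ∀ p, (∀ i, c i ⬝ᵥ p = 0) → ∃ v, G.mulVec v = p := by
  classical
  set M : Matrix (Fin e) n k := Matrix.of c
  have hker : Module.finrank k (Fin r → k) = Module.finrank k (LinearMap.ker M.mulVecLin) := by
    have hsum := LinearMap.finrank_range_add_finrank_ker M.mulVecLin
    rw [← Matrix.rank, LinearIndependent.rank_matrix (M := M) hc, Fintype.card_fin,
      Module.finrank_fintype_fun_eq_card] at hsum
    rw [Module.finrank_fin_fun]
    lia
  let E := LinearEquiv.ofFinrankEq _ _ hker
  let g := (LinearMap.ker M.mulVecLin).subtype ∘ₗ E.toLinearMap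
  refine ⟨LinearMap.toMatrix' g, fun v hv => ?_, fun p hp => ?_⟩
  · rw [LinearMap.toMatrix'_mulVec] at hv
    exact (LinearEquiv.map_eq_zero_iff E).1 (Subtype.ext hv)
  · refine ⟨E.symm ⟨p, _root_.funext hp⟩, ?_⟩
    rw [LinearMap.toMatrix'_mulVec]
    simp [g]

variable [IsAlgClosed k]

theorem exists_projection_step {u : Fin (m + 1) → MvPolynomial (Fin r) k} (hrm : r ≤ m)
    (hd : 1 ≤ d) (hu : ∀ i, (u i).IsHomogeneous d)
    (h0 : ∀ v : Fin r → k, (fun i => eval v (u i)) = 0 → v = 0) :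
    ∃ P : Matrix (Fin m) (Fin (m + 1)) k,
      ∀ v : Fin r → k, P.mulVec (fun i => eval v (u i)) = 0 → v = 0 := by
  have : Infinite k := IsAlgClosed.instInfinite
  obtain ⟨w, hw⟩ := exists_forall_eval_ne u (by simpa using Nat.lt_succ_of_le hrm)
  have hw0 : w ≠ 0 := fun hw0 =>
    hw 0 (hw0 ▸ _root_.funext fun i => eval_zero_of_isHomogeneous (hu i) hd)
  obtain ⟨P, hP⟩ := exists_mulVec_eq_zero_imp_mem_span hw0
  refine ⟨P, fun v hv => h0 v ?_⟩
  obtain ⟨t, ht⟩ := Submodule.mem_span_singleton.1 (hP _ hv)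
  rcases eq_or_ne t 0 with rfl | ht0
  · rw [← ht, zero_smul]
  obtain ⟨s, hs⟩ := IsAlgClosed.exists_pow_nat_eq t⁻¹ hd
  refine absurd (_root_.funext fun i => ?_) (hw (s • v))
  rw [eval_smul_of_isHomogeneous (hu i), hs, ← congrFun ht i, Pi.smul_apply, smul_eq_mul,
    inv_mul_cancel_left₀ ht0]

theorem exists_projection {u : Fin m → MvPolynomial (Fin r) k} (hrm : r ≤ m) (hd : 1 ≤ d)
    (hu : ∀ i, (u i).IsHomogeneous d)
    (h0 : ∀ v : Fin r → k, (fun i => eval v (u i)) = 0 → v = 0) :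
    ∃ P : Matrix (Fin r) (Fin m) k,
      ∀ v : Fin r → k, P.mulVec (fun i => eval v (u i)) = 0 → v = 0 := by
  induction m, hrm using Nat.le_induction with
  | base => exact ⟨1, fun v hv => h0 v (by rwa [Matrix.one_mulVec] at hv)⟩
  | succ m hrm ih =>
    obtain ⟨P, hP⟩ := exists_projection_step hrm hd hu h0
    have heval (v : Fin r → k) :
        (fun j => eval v (∑ i, P j i • u i)) = P.mulVec fun i => eval v (u i) := by
      ext j
      simp [Matrix.mulVec, dotProduct]
    obtain ⟨P', hP'⟩ := ih (u := fun j => ∑ i, P j i • u i)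
      (fun j => Submodule.sum_mem (homogeneousSubmodule _ k d) fun i _ =>
        Submodule.smul_mem _ _ (hu i))
      (fun v hv => hP v (heval v ▸ hv))
    exact ⟨P' * P, fun v hv => hP' v (by rwa [heval, Matrix.mulVec_mulVec])⟩

variable {n : Type*} [Fintype n] {q : n → MvPolynomial n k} {c : Fin e → n → k}

theorem exists_linear_section (hd : 1 ≤ d) (hq : ∀ i, (q i).IsHomogeneous d)
    (h0 : ∀ p : n → k, (∀ i, eval p (q i) = 0) → p = 0) (her : e + r = Fintype.card n)
    (hc : LinearIndependent k c) :
    ∃ Q : Fin r → MvPolynomial n k, (∀ j, Q j ∈ Submodule.span k (Set.range q)) ∧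
      ∀ p : n → k, (∀ i, eval p (lin (c i)) = 0) → (∀ j, eval p (Q j) = 0) → p = 0 := by
  obtain ⟨G, hG, hGc⟩ := exists_mulVec_parametrization her hc
  let E := Fintype.equivFin n
  let u (i : Fin (Fintype.card n)) : MvPolynomial (Fin r) k :=
    aeval (fun a => lin (G a)) (q (E.symm i))
  have hu (v : Fin r → k) (i : Fin (Fintype.card n)) :
      eval v (u i) = eval (G.mulVec v) (q (E.symm i)) := eval_aeval_lin G v _
  obtain ⟨P, hP⟩ := exists_projection (u := u) (d := d) (by lia) hd
    (fun i => one_mul d ▸ (hq _).aeval _ fun a => isHomogeneous_lin (G a))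
    (fun v hv => hG v (h0 _ fun i => by
      simpa only [hu, E.symm_apply_apply, Pi.zero_apply] using congrFun hv (E i)))
  refine ⟨fun j => ∑ i, P j i • q (E.symm i), fun j => Submodule.sum_mem _ fun i _ =>
    Submodule.smul_mem _ _ (Submodule.subset_span ⟨_, rfl⟩), fun p hpc hpQ => ?_⟩
  obtain ⟨v, rfl⟩ := hGc p fun i => eval_lin (c i) p ▸ hpc i
  have hPv : P.mulVec (fun i => eval v (u i)) = 0 := by
    ext j
    simpa only [hu, Matrix.mulVec, dotProduct, map_sum, smul_eval, Pi.zero_apply] using hpQ j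
  rw [hP v hPv, Matrix.mulVec_zero]

theorem mem_span_lin_sup_of_isHomogeneous (hd : 1 ≤ d) (hq : ∀ i, (q i).IsHomogeneous d)
    (h0 : ∀ p : n → k, (∀ i, eval p (q i) = 0) → p = 0) (her : e + r = Fintype.card n)
    (hc : LinearIndependent k c) {b : MvPolynomial n k} {i : ℕ} (hb : b.IsHomogeneous i)
    (hi : r * (d - 1) < i) :
    b ∈ Ideal.span (Set.range fun j => lin (c j)) ⊔ Ideal.span (Set.range q) := by
  obtain ⟨Q, hQ, hQ0⟩ := exists_linear_section hd hq h0 her hc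
  have hQh (j : Fin r) : (Q j).IsHomogeneous d :=
    (Submodule.span_le (p := homogeneousSubmodule n k d)).2 (Set.range_subset_iff.2 hq) (hQ j)
  let z : Fin e ⊕ Fin r → MvPolynomial n k := Sum.elim (fun j => lin (c j)) Q
  let φ : n ≃ Fin e ⊕ Fin r :=
    (Fintype.equivFin n).trans ((finCongr her.symm).trans finSumFinEquiv.symm)
  have hz0 (p : n → k) (hp : ∀ j, eval p ((z ∘ φ) j) = 0) : p = 0 := by
    have hpz (j : Fin e ⊕ Fin r) : eval p (z j) = 0 := by simpa using hp (φ.symm j)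
    exact hQ0 p (fun j => hpz (Sum.inl j)) fun j => hpz (Sum.inr j)
  have hsoc := (isRegularFamily_and_hasSimpleSocle (y := z ∘ φ)
    (d := Sum.elim (fun _ => 1) (fun _ => d) ∘ φ)
    (fun j => by
      rcases h : φ j with j | j <;> simp [z, h, isHomogeneous_lin, hQh])
    (fun j => by rcases h : φ j with j | j <;> simp [h, hd]) hz0).2
  have hsum : ∑ j, ((Sum.elim (fun _ => 1) (fun _ => d) ∘ φ : n → ℕ) j - 1) = r * (d - 1) := by
    rw [← φ.symm.sum_comp]
    simp
  rw [hsum] at hsoc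
  have hbz := hsoc.mem_of_lt (exists_forall_isHomogeneous_mem hz0) hi hb
  rw [φ.surjective.range_comp, Set.Sum.elim_range, Ideal.span_union] at hbz
  have hQle : Ideal.span (Set.range Q) ≤ Ideal.span (Set.range q) :=
    Ideal.span_le.2 (Set.range_subset_iff.2 fun j =>
      Submodule.span_le_restrictScalars k _ _ (hQ j))
  exact sup_le_sup le_rfl hQle hbz

theorem mem_span_of_forall_lin_mul_mem (hd : 1 ≤ d) (hq : ∀ i, (q i).IsHomogeneous d)
    (h0 : ∀ p : n → k, (∀ i, eval p (q i) = 0) → p = 0) (hc : LinearIndependent k c)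
    {a : MvPolynomial n k} {i : ℕ} (hi : i < e * (d - 1)) (ha : a.IsHomogeneous i)
    (hca : ∀ j, lin (c j) * a ∈ Ideal.span (Set.range q)) : a ∈ Ideal.span (Set.range q) := by
  obtain ⟨r, her⟩ := Nat.exists_eq_add_of_le
    (hc.fintype_card_le_finrank.trans_eq (Module.finrank_fintype_fun_eq_card k))
  rw [Fintype.card_fin] at her
  have hsoc := (isRegularFamily_and_hasSimpleSocle hq (fun _ => hd) h0).2
  rw [Finset.sum_const, Finset.card_univ, her, smul_eq_mul, add_mul] at hsoc
  by_contra haI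
  obtain ⟨b, hb, hba⟩ := hsoc.exists_mul_notMem (by lia) ha haI
  have hle : Ideal.span (Set.range fun j => lin (c j)) ⊔ Ideal.span (Set.range q) ≤
      (Ideal.span (Set.range q)).colon {a} := by
    refine sup_le (Ideal.span_le.2 (Set.range_subset_iff.2 fun j => ?_)) fun b hb => ?_
    · exact Submodule.mem_colon_singleton.2 (hca j)
    · exact Submodule.mem_colon_singleton.2 (Ideal.mul_mem_right a _ hb)
  exact hba (Submodule.mem_colon_singleton.1
    (hle (mem_span_lin_sup_of_isHomogeneous hd hq h0 her.symm hc hb (by lia))))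

end LinearSections

section GradedPieces

variable {n k : Type*} [Field k] {I : Ideal (MvPolynomial n k)} {q : n → MvPolynomial n k}
  {i j d e s : ℕ}

/-- The part of `V` annihilated by `a`. -/
def annIn {A : Type*} [CommRing A] [Algebra k A] (V : Submodule k A) (a : A) : Submodule k A :=
  V ⊓ LinearMap.ker (LinearMap.mulRight k a)

theorem mem_annIn {A : Type*} [CommRing A] [Algebra k A] {V : Submodule k A} {a x : A} :
    x ∈ annIn V a ↔ x ∈ V ∧ x * a = 0 :=
  Iff.rfl

instance finiteDimensional_annIn {A : Type*} [CommRing A] [Algebra k A] (V : Submodule k A)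
    [FiniteDimensional k V] (a : A) : FiniteDimensional k (annIn V a) :=
  Submodule.finiteDimensional_inf_left _ _

/-- The degree-`i` graded piece of `k[X] / I`, over an arbitrary field. -/
def piece (I : Ideal (MvPolynomial n k)) (i : ℕ) : Submodule k (MvPolynomial n k ⧸ I) :=
  (homogeneousSubmodule n k i).map (Ideal.Quotient.mkₐ k I).toLinearMap

theorem mem_piece {a : MvPolynomial n k ⧸ I} :
    a ∈ piece I i ↔ ∃ p : MvPolynomial n k, p.IsHomogeneous i ∧ Ideal.Quotient.mk I p = a :=
  Iff.rfl

theorem mul_mem_piece {a b : MvPolynomial n k ⧸ I} (ha : a ∈ piece I i) (hb : b ∈ piece I j) :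
    a * b ∈ piece I (i + j) := by
  obtain ⟨p, hp, rfl⟩ := mem_piece.1 ha
  obtain ⟨r, hr, rfl⟩ := mem_piece.1 hb
  exact mem_piece.2 ⟨p * r, hp.mul hr, map_mul _ p r⟩

instance finiteDimensional_piece [Finite n] (I : Ideal (MvPolynomial n k)) (i : ℕ) :
    FiniteDimensional k (piece I i) :=
  Module.Finite.iff_fg.2 ((homogeneousSubmodule_fg n k i).map _)

theorem HasSimpleSocle.eq_zero_of_forall_mul_eq_zero (h : HasSimpleSocle I s) (hi : i ≠ s)
    {a : MvPolynomial n k ⧸ I} (ha : a ∈ piece I i) (hx : ∀ x ∈ piece I 1, x * a = 0) : a = 0 := by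
  obtain ⟨p, hp, rfl⟩ := mem_piece.1 ha
  refine Ideal.Quotient.eq_zero_iff_mem.2 (h.mem_of_forall_X_mul_mem hp hi fun j => ?_)
  exact Ideal.Quotient.eq_zero_iff_mem.1 (hx _ (mem_piece.2 ⟨X j, isHomogeneous_X k j, rfl⟩))

theorem HasSimpleSocle.finrank_piece_le_one [Finite n] (h : HasSimpleSocle I s)
    (hI : ∃ N, ∀ e, N ≤ e → ∀ p : MvPolynomial n k, p.IsHomogeneous e → p ∈ I) :
    Module.finrank k (piece I s) ≤ 1 := by
  have hkill {p : MvPolynomial n k} (hp : p.IsHomogeneous s) (j : n) : X j * p ∈ I :=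
    h.mem_of_lt hI (Nat.lt_succ_self s) (isHomogeneous_X_mul hp j)
  by_contra! h2
  obtain ⟨b, hb⟩ := exists_linearIndependent_of_le_finrank (Nat.succ_le_of_lt h2)
  obtain ⟨p, hp, hp0⟩ := mem_piece.1 (b 0).2
  obtain ⟨r, hr, hr1⟩ := mem_piece.1 (b 1).2
  obtain ⟨α, β, hne, hmem⟩ := h.exists_smul_add_smul_mem hp hr (hkill hp) (hkill hr)
  have hαβ : α • b 0 + β • b 1 = 0 := Subtype.ext <| by
    rw [Submodule.coe_add, Submodule.coe_smul, Submodule.coe_smul, ← hp0, ← hr1]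
    exact Ideal.Quotient.eq_zero_iff_mem.2 hmem
  have hzero := Fintype.linearIndependent_iff.1 hb ![α, β] (by simpa using hαβ)
  exact hne.elim (· (hzero 0)) (· (hzero 1))

theorem eq_zero_of_isHomogeneous_of_mem_span [Finite n] (hq : ∀ i, (q i).IsHomogeneous d)
    (hed : e < d) {p : MvPolynomial n k} (hp : p.IsHomogeneous e)
    (h : p ∈ Ideal.span (Set.range q)) : p = 0 := by
  have := Fintype.ofFinite n
  obtain ⟨c, hc⟩ := Ideal.mem_span_range_iff_exists_fun.1 h
  rw [← homogeneousComponent_eq_self hp, ← hc, map_sum]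
  exact Finset.sum_eq_zero fun i _ => homogeneousComponent_mul_of_lt (hq i) hed _

theorem one_notMem_span (hq : ∀ i, (q i).IsHomogeneous d) (hd : 1 ≤ d) :
    (1 : MvPolynomial n k) ∉ Ideal.span (Set.range q) := fun h => by
  have hle : Ideal.span (Set.range q) ≤ RingHom.ker (eval (0 : n → k)) :=
    Ideal.span_le.2 (Set.range_subset_iff.2 fun i => eval_zero_of_isHomogeneous (hq i) hd)
  simpa using hle h

variable [Fintype n]

/-- The linear map sending a coefficient vector to the class of its linear form. -/
def linClass (I : Ideal (MvPolynomial n k)) : (n → k) →ₗ[k] MvPolynomial n k ⧸ I :=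
  (Ideal.Quotient.mkₐ k I).toLinearMap ∘ₗ lin

theorem range_linClass (I : Ideal (MvPolynomial n k)) :
    LinearMap.range (linClass I) = piece I 1 := by
  rw [linClass, LinearMap.range_comp, range_lin, piece]

theorem linClass_eq_sum (c : n → k) : linClass I c = ∑ i, c i • Ideal.Quotient.mk I (X i) := by
  rw [linClass, LinearMap.comp_apply, lin, Fintype.linearCombination_apply, map_sum]
  exact Finset.sum_congr rfl fun i _ => map_smul (Ideal.Quotient.mkₐ k I) (c i) (X i)

theorem linClass_single [DecidableEq n] (I : Ideal (MvPolynomial n k)) (i : n) :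
    linClass I (Pi.single i 1) = Ideal.Quotient.mk I (X i) :=
  congrArg (Ideal.Quotient.mk I) (lin_single i)

theorem lin_injective : Function.Injective (lin : (n → k) →ₗ[k] MvPolynomial n k) :=
  (linearIndependent_X n k).fintypeLinearCombination_injective

theorem linClass_injective (hq : ∀ i, (q i).IsHomogeneous d) (hd : 2 ≤ d) :
    Function.Injective (linClass (Ideal.span (Set.range q))) := by
  refine (injective_iff_map_eq_zero _).2 fun c hc => lin_injective ?_
  rw [map_zero]
  exact eq_zero_of_isHomogeneous_of_mem_span hq hd (isHomogeneous_lin c)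
    (Ideal.Quotient.eq_zero_iff_mem.1 hc)

theorem finrank_piece_one (hq : ∀ i, (q i).IsHomogeneous d) (hd : 2 ≤ d) :
    Module.finrank k (piece (Ideal.span (Set.range q)) 1) = Fintype.card n := by
  rw [← range_linClass, LinearMap.finrank_range_of_inj (linClass_injective hq hd),
    Module.finrank_fintype_fun_eq_card]

theorem finrank_homogeneousSubmodule_two_le :
    Module.finrank k (homogeneousSubmodule n k 2) ≤ (Fintype.card n + 1).choose 2 := by
  classical
  let g : Sym2 n → MvPolynomial n k := Sym2.lift ⟨fun i j => X i * X j, fun i j => mul_comm _ _⟩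
  have hle : homogeneousSubmodule n k 2 ≤ Submodule.span k (Set.range g) := by
    rw [← homogeneousSubmodule_one_pow, homogeneousSubmodule_one_eq_span_X, pow_two,
      Submodule.span_mul_span]
    exact Submodule.span_mono (Set.mul_subset_iff.2 (by
      rintro _ ⟨i, rfl⟩ _ ⟨j, rfl⟩
      exact ⟨s(i, j), rfl⟩))
  have : FiniteDimensional k (Submodule.span k (Set.range g)) :=
    FiniteDimensional.span_of_finite k (Set.finite_range g)
  exact (Submodule.finrank_mono hle).trans ((finrank_range_le_card g).trans_eq Sym2.card)

theorem finrank_piece_two_add_card_le (hq : ∀ i, (q i).IsHomogeneous 2)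
    (hli : LinearIndependent k q) :
    Module.finrank k (piece (Ideal.span (Set.range q)) 2) + Fintype.card n ≤
      (Fintype.card n + 1).choose 2 := by
  set φ := (Ideal.Quotient.mkₐ k (Ideal.span (Set.range q))).toLinearMap.domRestrict
    (homogeneousSubmodule n k 2)
  have : FiniteDimensional k (homogeneousSubmodule n k 2) :=
    Module.Finite.iff_fg.2 (homogeneousSubmodule_fg n k 2)
  let g : n → LinearMap.ker φ := fun i =>
    ⟨⟨q i, hq i⟩, Ideal.Quotient.eq_zero_iff_mem.2 (Ideal.subset_span ⟨i, rfl⟩)⟩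
  have hg : LinearIndependent k g := hli.of_comp
    ((homogeneousSubmodule n k 2).subtype ∘ₗ (LinearMap.ker φ).subtype)
  have hsum := LinearMap.finrank_range_add_finrank_ker φ
  rw [LinearMap.range_domRestrict] at hsum
  exact (Nat.add_le_add_left hg.fintype_card_le_finrank _).trans
    (hsum.trans_le finrank_homogeneousSubmodule_two_le)

end GradedPieces

theorem finrank_annIn_le {n k : Type*} [Field k] [IsAlgClosed k] [Finite n]
    {q : n → MvPolynomial n k} {i : ℕ} (hq : ∀ i, (q i).IsHomogeneous 2)
    (h0 : ∀ p : n → k, (∀ i, eval p (q i) = 0) → p = 0)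
    {a : MvPolynomial n k ⧸ Ideal.span (Set.range q)}
    (ha : a ∈ piece (Ideal.span (Set.range q)) i) (ha0 : a ≠ 0) :
    Module.finrank k (annIn (piece (Ideal.span (Set.range q)) 1) a) ≤ i := by
  have := Fintype.ofFinite n
  set I := Ideal.span (Set.range q)
  obtain ⟨p, hp, rfl⟩ := mem_piece.1 ha
  by_contra! hi
  let b := Module.finBasis k (annIn (piece I 1) (Ideal.Quotient.mk I p))
  have hb (j) : ∃ c, linClass I c = b j := (range_linClass I).ge (mem_annIn.1 (b j).2).1
  choose c hc using hb
  have hcli : LinearIndependent k c := by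
    refine LinearIndependent.of_comp (linClass I) ?_
    rw [show linClass I ∘ c = fun j => (b j : MvPolynomial n k ⧸ I) from _root_.funext hc]
    exact b.linearIndependent.map' (Submodule.subtype _) (Submodule.ker_subtype _)
  refine ha0 (Ideal.Quotient.eq_zero_iff_mem.2 (mem_span_of_forall_lin_mul_mem one_le_two hq h0
    hcli (hi.trans_eq (mul_one _).symm) hp fun j => Ideal.Quotient.eq_zero_iff_mem.1 ?_))
  exact (congrArg (· * _) (hc j)).trans (mem_annIn.1 (b j).2).2

section FiveQuadrics

/-- The properties of the graded pieces `G i` of a complete intersection of five quadrics in five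
variables from which the injectivity of a generic linear form in degree `2` is deduced. -/
structure IsFiveQuadricGrading {k A : Type*} [Field k] [CommRing A] [Algebra k A]
    (G : ℕ → Submodule k A) : Prop where
  mul_mem {i j : ℕ} {a b : A} : a ∈ G i → b ∈ G j → a * b ∈ G (i + j)
  finiteDimensional (i : ℕ) : FiniteDimensional k (G i)
  finrank_one : Module.finrank k (G 1) = 5
  finrank_two_le : Module.finrank k (G 2) ≤ 10
  finrank_five_le : Module.finrank k (G 5) ≤ 1
  eq_zero_of_forall_mul_eq_zero {i : ℕ} {a : A} :
    i ≠ 5 → a ∈ G i → (∀ x ∈ G 1, x * a = 0) → a = 0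
  finrank_annIn_le {i : ℕ} {a : A} : a ∈ G i → a ≠ 0 → Module.finrank k (annIn (G 1) a) ≤ i

theorem isFiveQuadricGrading_piece {k : Type*} [Field k] [IsAlgClosed k]
    {q : Fin 5 → MvPolynomial (Fin 5) k} (hq : ∀ i, (q i).IsHomogeneous 2)
    (h0 : ∀ p : Fin 5 → k, (∀ i, eval p (q i) = 0) → p = 0) :
    IsFiveQuadricGrading (piece (Ideal.span (Set.range q))) := by
  obtain ⟨hreg, hsoc⟩ := isRegularFamily_and_hasSimpleSocle hq (fun _ => one_le_two) h0
  simp only [Nat.add_one_sub_one, Finset.sum_const, Finset.card_univ, Fintype.card_fin,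
    smul_eq_mul, mul_one] at hsoc
  refine
    { mul_mem := mul_mem_piece
      finiteDimensional := finiteDimensional_piece _
      finrank_one := finrank_piece_one hq le_rfl
      finrank_two_le := ?_
      finrank_five_le := hsoc.finrank_piece_le_one (exists_forall_isHomogeneous_mem h0)
      eq_zero_of_forall_mul_eq_zero := fun hi ha hx => hsoc.eq_zero_of_forall_mul_eq_zero hi ha hx
      finrank_annIn_le := finrank_annIn_le hq h0 }
  have h15 := finrank_piece_two_add_card_le hq
    (hreg.linearIndependent (one_notMem_span hq one_le_two))
  rw [Fintype.card_fin] at h15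
  exact Nat.le_of_add_le_add_right (h15.trans_eq (by decide : (5 + 1).choose 2 = 10 + 5))

end FiveQuadrics

section LinearAlgebra

variable {k V W : Type*} [Field k] [AddCommGroup V] [Module k V] [AddCommGroup W] [Module k W]

theorem finrank_le_finrank_add_finrank {S T : Submodule k V} {U : Submodule k W}
    [FiniteDimensional k S] [FiniteDimensional k T] [FiniteDimensional k U] (φ : V →ₗ[k] W)
    (hker : ∀ x ∈ S, φ x = 0 → x ∈ T) (hmap : ∀ x ∈ S, φ x ∈ U) :
    Module.finrank k S ≤ Module.finrank k T + Module.finrank k U := by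
  have hT : Module.finrank k (LinearMap.ker (φ.domRestrict S)) ≤ Module.finrank k T := by
    rw [← Submodule.finrank_map_subtype_eq]
    refine Submodule.finrank_mono (Submodule.map_le_iff_le_comap.2 fun x hx => ?_)
    exact hker x x.2 (LinearMap.mem_ker.1 hx)
  have hU : Module.finrank k (LinearMap.range (φ.domRestrict S)) ≤ Module.finrank k U := by
    rw [LinearMap.range_domRestrict]
    exact Submodule.finrank_mono (Submodule.map_le_iff_le_comap.2 hmap)
  rw [← LinearMap.finrank_range_add_finrank_ker (φ.domRestrict S), add_comm]
  exact add_le_add hT hU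

theorem finrank_map_mkQ_add_finrank {S T : Submodule k V} [FiniteDimensional k T] (h : S ≤ T) :
    Module.finrank k (T.map S.mkQ) + Module.finrank k S = Module.finrank k T := by
  have hsum := LinearMap.finrank_range_add_finrank_ker (S.mkQ.domRestrict T)
  rw [LinearMap.range_domRestrict, LinearMap.ker_domRestrict, Submodule.ker_mkQ] at hsum
  rwa [← Submodule.submoduleOf, (Submodule.submoduleOfEquivOfLe h).finrank_eq] at hsum

theorem finrank_ker_flip_add_finrank [FiniteDimensional k V] [FiniteDimensional k W]
    (B : V →ₗ[k] W →ₗ[k] k) :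
    Module.finrank k (LinearMap.ker B.flip) + Module.finrank k V =
      Module.finrank k W + Module.finrank k (LinearMap.ker B) := by
  have hflip : B.flip = B.dualMap ∘ₗ Module.Dual.eval k W := rfl
  have hrank : Module.finrank k (LinearMap.range B.flip) =
      Module.finrank k (LinearMap.range B) := by
    rw [hflip, LinearMap.range_comp_of_range_eq_top _ (Module.finBasis k W).eval_range,
      LinearMap.finrank_range_dualMap_eq_finrank_range]
  have hB := LinearMap.finrank_range_add_finrank_ker B
  have hBf := LinearMap.finrank_range_add_finrank_ker B.flip
  lia

theorem exists_functional_of_finrank_le_one {S : Submodule k V} [FiniteDimensional k S]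
    (h : Module.finrank k S ≤ 1) : ∃ φ : V →ₗ[k] k, ∀ z ∈ S, φ z = 0 → z = 0 := by
  have hle : Module.finrank k S ≤ Module.finrank k k := by rwa [Module.finrank_self]
  obtain ⟨ψ, hψ⟩ := finrank_le_iff_exists_linearMap.1 hle
  obtain ⟨φ, rfl⟩ := ψ.exists_extend
  refine ⟨φ, fun z hz h0 => congrArg Subtype.val (hψ (a₁ := ⟨z, hz⟩) (a₂ := 0) ?_)⟩
  rwa [map_zero]

theorem eq_span_singleton_of_finrank_le_one {S : Submodule k V} [FiniteDimensional k S]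
    (h : Module.finrank k S ≤ 1) {x : V} (hx : x ∈ S) (hx0 : x ≠ 0) : S = k ∙ x :=
  (Submodule.eq_of_le_of_finrank_le ((Submodule.span_singleton_le_iff_mem _ _).2 hx)
    (by rwa [finrank_span_singleton hx0])).symm

theorem eq_span_pair_of_finrank_le_two {S : Submodule k V} [FiniteDimensional k S]
    (h : Module.finrank k S ≤ 2) {x y : V} (hx : x ∈ S) (hy : y ∈ S) (hx0 : x ≠ 0)
    (hyx : y ∉ k ∙ x) : S = Submodule.span k {x, y} := by
  have hle : Submodule.span k {x, y} ≤ S := Submodule.span_le.2 (Set.pair_subset hx hy)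
  have : FiniteDimensional k (Submodule.span k {x, y}) := Submodule.finiteDimensional_of_le hle
  have hlt : k ∙ x < Submodule.span k {x, y} :=
    (Submodule.span_mono (by simp)).lt_of_not_ge fun hge =>
      hyx (hge (Submodule.subset_span (by simp)))
  have h2 := Submodule.finrank_lt_finrank_of_lt hlt
  rw [finrank_span_singleton hx0] at h2
  exact (Submodule.eq_of_le_of_finrank_le hle (h.trans h2)).symm

theorem finrank_span_singleton_le_one (x : V) : Module.finrank k (k ∙ x) ≤ 1 :=
  (finrank_span_le_card _).trans (by simp)

instance finiteDimensional_submodule_prod (S : Submodule k V) (T : Submodule k W)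
    [FiniteDimensional k S] [FiniteDimensional k T] : FiniteDimensional k (S.prod T) :=
  Module.Finite.iff_fg.2 ((Module.Finite.iff_fg.1 ‹_›).prod (Module.Finite.iff_fg.1 ‹_›))

theorem finrank_submodule_prod (S : Submodule k V) (T : Submodule k W) [FiniteDimensional k S]
    [FiniteDimensional k T] :
    Module.finrank k (S.prod T) = Module.finrank k S + Module.finrank k T := by
  rw [← Module.finrank_prod, ← LinearMap.finrank_range_of_inj
    (f := S.subtype.prodMap T.subtype) (S.injective_subtype.prodMap T.injective_subtype),
    LinearMap.range_prodMap, Submodule.range_subtype, Submodule.range_subtype]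

theorem exists_apply_sub_smul_mem [IsAlgClosed k] {S T : Submodule k V} [FiniteDimensional k T]
    (φ : V →ₗ[k] V) (hST : ¬T ≤ S) (hS : ∀ x ∈ S, φ x ∈ S) (hT : ∀ x ∈ T, φ x ∈ T) :
    ∃ x ∈ T, x ∉ S ∧ ∃ μ : k, φ x - μ • x ∈ S := by
  obtain ⟨y, hyT, hyS⟩ := SetLike.not_le_iff_exists.1 hST
  have hmap : ∀ x ∈ T.map S.mkQ, S.mapQ S φ hS x ∈ T.map S.mkQ := by
    rintro _ ⟨x, hx, rfl⟩
    exact ⟨φ x, hT x hx, rfl⟩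
  have : Nontrivial (T.map S.mkQ) := ⟨⟨_, Submodule.mem_map_of_mem hyT⟩, 0, fun h =>
    hyS ((Submodule.Quotient.mk_eq_zero S).1 (congrArg Subtype.val h))⟩
  obtain ⟨μ, hμ⟩ := Module.End.exists_eigenvalue ((S.mapQ S φ hS).restrict hmap)
  obtain ⟨⟨_, x, hx, rfl⟩, hv⟩ := hμ.exists_hasEigenvector
  refine ⟨x, hx, fun hxS => hv.2 (Subtype.ext ((Submodule.Quotient.mk_eq_zero S).2 hxS)), μ, ?_⟩
  exact (Submodule.Quotient.eq S).1 (congrArg Subtype.val hv.apply_eq_smul)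

end LinearAlgebra

section GenericLinearForm

/-- A linear form `L` in general position, witnessed by additive operators `D M`, for `M` in `A`,
that satisfy the Leibniz rule, preserve the grading and move `L` to every linear form: `D M L = M`.
For the generic linear form `∑ tᵢ xᵢ` over a field containing the indeterminates `tᵢ`, these are the
derivations extending `∑ cᵢ ∂/∂tᵢ`, and a scalar is therefore not a constant for `D M`. -/
structure IsGenericLinearForm {k A : Type*} [Field k] [CommRing A] [Algebra k A]
    (G : ℕ → Submodule k A) (D : A →ₗ[k] A →+ A) (L : A) : Prop where
  mem : L ∈ G 1
  leibniz (M a b : A) : D M (a * b) = a * D M b + b * D M a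
  map_mem (M : A) {i : ℕ} {a : A} : a ∈ G i → D M a ∈ G i
  apply_self (M : A) : M ∈ G 1 → D M L = M
  exists_map_smul (M : A) (c : k) : ∃ d : k, ∀ a, D M (c • a) = d • a + c • D M a

variable {k A : Type*} [Field k] [CommRing A] [Algebra k A] {G : ℕ → Submodule k A}
  {D : A →ₗ[k] A →+ A} {L a f : A} {i : ℕ}

variable (k) in
theorem eq_zero_of_natCast_mul_eq_zero [CharZero k] {n : ℕ} (hn : n ≠ 0) (h : (n : A) * a = 0) :
    a = 0 := by
  rw [← nsmul_eq_mul, ← Nat.cast_smul_eq_nsmul k] at h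
  exact (smul_eq_zero.1 h).resolve_left (Nat.cast_ne_zero.2 hn)

/-- The linear map `M ↦ D M a`. -/
def derAt (D : A →ₗ[k] A →+ A) (a : A) : A →ₗ[k] A where
  toFun M := D M a
  map_add' M N := by rw [map_add]; rfl
  map_smul' c M := by rw [map_smul]; rfl

namespace IsFiveQuadricGrading

theorem eq_zero_of_forall_mul_mul_eq_zero (hG : IsFiveQuadricGrading G) (hi : i < 4)
    (ha : a ∈ G i) (h : ∀ x ∈ G 1, ∀ y ∈ G 1, x * (y * a) = 0) : a = 0 :=
  hG.eq_zero_of_forall_mul_eq_zero (by lia) ha fun y hy =>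
    hG.eq_zero_of_forall_mul_eq_zero (by lia) (hG.mul_mem hy ha) fun x hx => h x hx y hy

theorem five_le_finrank_add_finrank {W : Type*} [AddCommGroup W] [Module k W]
    (hG : IsFiveQuadricGrading G) {T : Submodule k A} {U : Submodule k W}
    [FiniteDimensional k T] [FiniteDimensional k U] (φ : A →ₗ[k] W)
    (hker : ∀ M ∈ G 1, φ M = 0 → M ∈ T) (hmap : ∀ M ∈ G 1, φ M ∈ U) :
    5 ≤ Module.finrank k T + Module.finrank k U := by
  have := hG.finiteDimensional 1
  exact hG.finrank_one.symm.trans_le (finrank_le_finrank_add_finrank φ hker hmap)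

theorem five_le_of_le_sup (hG : IsFiveQuadricGrading G) {T U : Submodule k A}
    [FiniteDimensional k T] [FiniteDimensional k U] (h : G 1 ≤ T ⊔ U) :
    5 ≤ Module.finrank k T + Module.finrank k U :=
  hG.finrank_one.symm.trans_le
    ((Submodule.finrank_mono h).trans (Submodule.finrank_add_le_finrank_add_finrank T U))

theorem finrank_annIn_two_le (hG : IsFiveQuadricGrading G) (hf : f ∈ G 2) :
    Module.finrank k (annIn (G 2) f) ≤ 5 + Module.finrank k (annIn (G 1) f) := by
  have hfin := hG.finiteDimensional
  obtain ⟨φ, hφ⟩ := exists_functional_of_finrank_le_one hG.finrank_five_le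
  let B : G 1 →ₗ[k] G 2 →ₗ[k] k :=
    ((LinearMap.mul k A).compr₂ (φ ∘ₗ LinearMap.mulLeft k f)).compl₁₂ (G 1).subtype (G 2).subtype
  have hB : ∀ x y, B x y = φ (f * (x * y)) := fun x y => rfl
  have hker : Module.finrank k (LinearMap.ker B) ≤ Module.finrank k (annIn (G 1) f) := by
    rw [← Submodule.finrank_map_subtype_eq]
    refine Submodule.finrank_mono (Submodule.map_le_iff_le_comap.2 fun x hx => ?_)
    have hz : ∀ y ∈ G 2, f * (x * y) = 0 := fun y hy =>
      hφ _ (hG.mul_mem hf (hG.mul_mem x.2 hy))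
        (by rw [← hB x ⟨y, hy⟩, LinearMap.mem_ker.1 hx, LinearMap.zero_apply])
    have hxf : (x : A) * f = 0 := by
      refine hG.eq_zero_of_forall_mul_mul_eq_zero (by lia) (hG.mul_mem x.2 hf) fun y hy z hz1 => ?_
      linear_combination hz (y * z) (hG.mul_mem hy hz1)
    exact mem_annIn.2 ⟨x.2, hxf⟩
  have hflip : Module.finrank k (annIn (G 2) f) ≤ Module.finrank k (LinearMap.ker B.flip) := by
    rw [← Submodule.finrank_map_subtype_eq (G 2)]
    refine Submodule.finrank_mono fun y hy => ?_
    obtain ⟨hy2, hyf⟩ := mem_annIn.1 hy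
    refine ⟨⟨y, hy2⟩, LinearMap.ext fun x => ?_, rfl⟩
    rw [LinearMap.flip_apply, hB, show f * (x * y) = x * (y * f) by ring, hyf, mul_zero, map_zero,
      LinearMap.zero_apply]
  have hsum := finrank_ker_flip_add_finrank B
  have h10 := hG.finrank_two_le
  rw [hG.finrank_one] at hsum
  lia

end IsFiveQuadricGrading

namespace IsGenericLinearForm

theorem ne_zero (hL : IsGenericLinearForm G D L) (hG : IsFiveQuadricGrading G) : L ≠ 0 := by
  rintro rfl
  have hbot : G 1 = ⊥ := (Submodule.eq_bot_iff _).2 fun M hM => by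
    rw [← hL.apply_self M hM, map_zero]
  exact absurd (hbot ▸ hG.finrank_one) (by rw [finrank_bot]; decide)

theorem mul_add_mul_eq_zero (hL : IsGenericLinearForm G D L) (h : L * a = 0) {M : A}
    (hM : M ∈ G 1) : M * a + L * D M a = 0 := by
  have hD := congrArg (D M) h
  rw [hL.leibniz, hL.apply_self M hM, map_zero] at hD
  linear_combination hD

theorem mul_self_eq_zero (hL : IsGenericLinearForm G D L) (hG : IsFiveQuadricGrading G)
    (ha : a ∈ G i) (h : L * a = 0) : a * a = 0 := by
  refine hG.eq_zero_of_forall_mul_eq_zero (i := i + i) (by lia) (hG.mul_mem ha ha) fun M hM => ?_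
  linear_combination a * hL.mul_add_mul_eq_zero h hM - D M a * h

theorem two_mul_mul_add_eq_zero (hL : IsGenericLinearForm G D L) (h : L * (L * a) = 0) {M : A}
    (hM : M ∈ G 1) : 2 * (M * (L * a)) + L * L * D M a = 0 := by
  have hD := hL.mul_add_mul_eq_zero h hM
  rw [hL.leibniz, hL.apply_self M hM] at hD
  linear_combination hD

variable [CharZero k]

theorem mul_apply_eq_zero (hL : IsGenericLinearForm G D L) (h : a * a = 0) (M : A) :
    a * D M a = 0 := by
  have hD := congrArg (D M) h
  rw [hL.leibniz, map_zero] at hD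
  refine eq_zero_of_natCast_mul_eq_zero k two_ne_zero ?_
  linear_combination hD

theorem sq_mul_apply_eq_zero (hL : IsGenericLinearForm G D L) (h : a * (a * a) = 0) (M : A) :
    a * a * D M a = 0 := by
  have hD := congrArg (D M) h
  rw [hL.leibniz, hL.leibniz, map_zero] at hD
  refine eq_zero_of_natCast_mul_eq_zero k three_ne_zero ?_
  linear_combination hD

theorem eq_zero_of_mul_eq_zero_of_mem_one (hL : IsGenericLinearForm G D L)
    (hG : IsFiveQuadricGrading G) (ha : a ∈ G 1) (h : L * a = 0) : a = 0 := by
  by_contra ha0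
  have := hG.finiteDimensional 1
  have h5 : 5 ≤ Module.finrank k (annIn (G 1) a) + Module.finrank k (annIn (G 1) a) := by
    refine hG.five_le_finrank_add_finrank (derAt D a) (fun M hM (hMa : D M a = 0) => ?_)
      fun M _ => mem_annIn.2 ⟨hL.map_mem M ha, ?_⟩
    · have hM0 := hL.mul_add_mul_eq_zero h hM
      rw [hMa, mul_zero, add_zero] at hM0
      exact mem_annIn.2 ⟨hM, hM0⟩
    · exact (mul_comm _ _).trans (hL.mul_apply_eq_zero (hL.mul_self_eq_zero hG ha h) M)
  have h1 := hG.finrank_annIn_le ha ha0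
  lia

theorem cube_eq_zero (hL : IsGenericLinearForm G D L) (hG : IsFiveQuadricGrading G)
    (ha : a ∈ G 1) (h : L * (L * a) = 0) : a * (a * a) = 0 := by
  have haa : a * a ∈ G 2 := hG.mul_mem ha ha
  have hLaa : L * (a * a) = 0 := by
    refine hG.eq_zero_of_forall_mul_eq_zero (i := 3) (by lia) (hG.mul_mem hL.mem haa)
      fun M hM => eq_zero_of_natCast_mul_eq_zero k two_ne_zero ?_
    linear_combination a * hL.two_mul_mul_add_eq_zero h hM - D M a * h
  refine hG.eq_zero_of_forall_mul_eq_zero (i := 3) (by lia) (hG.mul_mem ha haa) fun M hM => ?_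
  have hD := hL.mul_add_mul_eq_zero hLaa hM
  rw [hL.leibniz] at hD
  linear_combination a * hD - 2 * D M a * hLaa

theorem eq_zero_of_sq_mul_eq_zero (hL : IsGenericLinearForm G D L) (hG : IsFiveQuadricGrading G)
    (ha : a ∈ G 1) (h : L * (L * a) = 0) : a = 0 := by
  by_contra ha0
  have := hG.finiteDimensional 1
  have hLa : L * a ≠ 0 := fun h0 => ha0 (hL.eq_zero_of_mul_eq_zero_of_mem_one hG ha h0)
  have h2 := hG.finrank_annIn_le (hG.mul_mem hL.mem ha) hLa
  have hker (M) (hM : M ∈ G 1) (hMa : D M a = 0) : M ∈ annIn (G 1) (L * a) := by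
    have hM0 := hL.two_mul_mul_add_eq_zero h hM
    rw [hMa, mul_zero, add_zero] at hM0
    exact mem_annIn.2 ⟨hM, eq_zero_of_natCast_mul_eq_zero k two_ne_zero (by exact_mod_cast hM0)⟩
  have haa : a * a = 0 := by
    by_contra haa
    have h2' := hG.finrank_annIn_le (hG.mul_mem ha ha) haa
    have h5 := hG.five_le_finrank_add_finrank (derAt D a) hker fun M _ =>
      mem_annIn.2 ⟨hL.map_mem M ha,
        (mul_comm _ _).trans (hL.sq_mul_apply_eq_zero (hL.cube_eq_zero hG ha h) M)⟩
    lia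
  have h1 := hG.finrank_annIn_le ha ha0
  have h5 := hG.five_le_finrank_add_finrank (derAt D a) hker fun M _ =>
    mem_annIn.2 ⟨hL.map_mem M ha, (mul_comm _ _).trans (hL.mul_apply_eq_zero haa M)⟩
  lia

end IsGenericLinearForm

end GenericLinearForm

section FixedAnnihilator

variable {k A : Type*} [Field k] [CharZero k] [CommRing A] [Algebra k A] {G : ℕ → Submodule k A}
  {D : A →ₗ[k] A →+ A} {L f : A}

namespace IsGenericLinearForm

theorem exists_eq_mul_add_smul (hL : IsGenericLinearForm G D L) (hG : IsFiveQuadricGrading G)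
    (hf : f ∈ G 2) (hf0 : f ≠ 0) (h : L * f = 0) (hann : Module.finrank k (annIn (G 1) f) ≤ 1)
    {y : A} (hy : y ∈ G 2) (hyf : y * f = 0) : ∃ b ∈ G 1, ∃ c : k, y = L * b + c • f := by
  have hfin := hG.finiteDimensional
  set S : Submodule k A := (G 1).map (LinearMap.mulLeft k L)
  have hS : 5 ≤ Module.finrank k S := by
    have h5 := hG.five_le_finrank_add_finrank (T := ⊥) (U := S) (LinearMap.mulLeft k L)
      (fun M hM hLM => hL.eq_zero_of_mul_eq_zero_of_mem_one hG hM hLM)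
      fun M hM => Submodule.mem_map_of_mem hM
    rwa [finrank_bot, zero_add] at h5
  have hfS : f ∉ S := by
    rintro ⟨a, ha, rfl⟩
    exact hf0 ((congrArg (L * ·) (hL.eq_zero_of_sq_mul_eq_zero hG ha h)).trans (mul_zero L))
  have hle : S ⊔ k ∙ f ≤ annIn (G 2) f := by
    refine sup_le (Submodule.map_le_iff_le_comap.2 fun b hb => ?_)
      ((Submodule.span_singleton_le_iff_mem _ _).2
        (mem_annIn.2 ⟨hf, hL.mul_self_eq_zero hG hf h⟩))
    refine mem_annIn.2 ⟨hG.mul_mem hL.mem hb, ?_⟩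
    rw [LinearMap.mulLeft_apply]
    linear_combination b * h
  have hlt : S < S ⊔ k ∙ f :=
    left_lt_sup.2 fun hfle => hfS ((Submodule.span_singleton_le_iff_mem _ _).1 hfle)
  have heq : S ⊔ k ∙ f = annIn (G 2) f := by
    have h6 := Submodule.finrank_lt_finrank_of_lt hlt
    have hann2 := hG.finrank_annIn_two_le hf
    exact Submodule.eq_of_le_of_finrank_le hle (by lia)
  obtain ⟨_, ⟨b, hb, rfl⟩, _, hz, rfl⟩ := Submodule.mem_sup.1 (heq.ge (mem_annIn.2 ⟨hy, hyf⟩))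
  obtain ⟨c, rfl⟩ := Submodule.mem_span_singleton.1 hz
  exact ⟨b, hb, c, rfl⟩

theorem mul_apply_mul_apply_add_add_eq_zero (hL : IsGenericLinearForm G D L)
    (hG : IsFiveQuadricGrading G) (hf : f ∈ G 2) (h : L * f = 0) {M N P : A} (hM : M ∈ G 1)
    (hN : N ∈ G 1) (hP : P ∈ G 1) :
    M * (D N f * D P f) + N * (D M f * D P f) + P * (D M f * D N f) = 0 := by
  have hfD := hL.mul_apply_eq_zero (hL.mul_self_eq_zero hG hf h)
  have hMf := congrArg (D N) (hL.mul_add_mul_eq_zero h hM)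
  rw [map_add, hL.leibniz, hL.leibniz, hL.apply_self N hN, map_zero] at hMf
  have hfM := congrArg (D N) (hfD M)
  rw [hL.leibniz, map_zero] at hfM
  linear_combination D P f * hMf - D N M * hfD P - D N (D M f) * hL.mul_add_mul_eq_zero h hP +
    P * hfM

theorem mul_eq_zero_of_apply_eq (hL : IsGenericLinearForm G D L) (hG : IsFiveQuadricGrading G)
    (hf : f ∈ G 2) (h : L * f = 0) {b : A → A} {c : A → k} (hb : ∀ M ∈ G 1, b M ∈ G 1)
    (hbc : ∀ M, D M f = L * b M + c M • f) {P : A} (hP : P ∈ G 1) : b P * f = 0 := by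
  have hsq (M) (hM : M ∈ G 1) : M * f + L * L * b M = 0 := by
    have hMf := hL.mul_add_mul_eq_zero h hM
    rw [hbc, Algebra.smul_def] at hMf
    linear_combination hMf - algebraMap k A (c M) * h
  have hprod (M N) : D M f * D N f = L * L * b M * b N := by
    rw [hbc M, hbc N, Algebra.smul_def, Algebra.smul_def]
    linear_combination (algebraMap k A (c N) * b M + algebraMap k A (c M) * b N) * h +
      algebraMap k A (c M) * algebraMap k A (c N) * hL.mul_self_eq_zero hG hf h
  refine hG.eq_zero_of_forall_mul_mul_eq_zero (by lia) (hG.mul_mem (hb P hP) hf)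
    fun M hM N hN => eq_zero_of_natCast_mul_eq_zero k three_ne_zero ?_
  have hcyc := hL.mul_apply_mul_apply_add_add_eq_zero hG hf h hM hN hP
  rw [hprod, hprod, hprod] at hcyc
  linear_combination -hcyc + M * b P * hsq N hN + 2 * N * b P * hsq M hM + P * b M * hsq N hN -
    N * b M * hsq P hP

theorem one_lt_finrank_annIn (hL : IsGenericLinearForm G D L) (hG : IsFiveQuadricGrading G)
    (hf : f ∈ G 2) (hf0 : f ≠ 0) (h : L * f = 0) : 1 < Module.finrank k (annIn (G 1) f) := by
  by_contra! hann
  have hfin := hG.finiteDimensional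
  have hfD := hL.mul_apply_eq_zero (hL.mul_self_eq_zero hG hf h)
  choose b hb c hbc using fun M =>
    hL.exists_eq_mul_add_smul hG hf hf0 h hann (hL.map_mem M hf) ((mul_comm _ _).trans (hfD M))
  have hW := eq_span_singleton_of_finrank_le_one hann (mem_annIn.2 ⟨hL.mem, h⟩) (hL.ne_zero hG)
  have h5 := hG.five_le_finrank_add_finrank (U := k ∙ (L * (L * L)))
    (T := annIn (G 1) f) (LinearMap.mulRight k f) (fun M hM hMf => mem_annIn.2 ⟨hM, hMf⟩)
    fun P hP => by
      have hbP := hL.mul_eq_zero_of_apply_eq hG hf h (fun M _ => hb M) hbc hP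
      obtain ⟨r, hr⟩ := Submodule.mem_span_singleton.1 (hW.le (mem_annIn.2 ⟨hb P, hbP⟩))
      have hPf := hL.mul_add_mul_eq_zero h hP
      rw [hbc, ← hr] at hPf
      refine Submodule.mem_span_singleton.2 ⟨-r, ?_⟩
      rw [LinearMap.mulRight_apply, Algebra.smul_def, map_neg]
      simp only [Algebra.smul_def] at hPf
      linear_combination algebraMap k A (c P) * h - hPf
  have h1 := finrank_span_singleton_le_one (k := k) (L * (L * L))
  lia

end IsGenericLinearForm

end FixedAnnihilator

section Pencil

variable {k A : Type*} [Field k] [CommRing A] [Algebra k A]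

/-- The pairs `(u, v)` of elements of `V` such that `L * u + K * v = 0`. -/
def syzygies (V : Submodule k A) (L K : A) : Submodule k (A × A) :=
  V.prod V ⊓ LinearMap.ker ((LinearMap.mulLeft k L).coprod (LinearMap.mulLeft k K))

variable {G : ℕ → Submodule k A} {D : A →ₗ[k] A →+ A} {V : Submodule k A} {L K f u v w x y M : A}

theorem mem_syzygies : (u, v) ∈ syzygies V L K ↔ u ∈ V ∧ v ∈ V ∧ L * u + K * v = 0 := and_assoc

instance finiteDimensional_syzygies [FiniteDimensional k V] (L K : A) :
    FiniteDimensional k (syzygies V L K) :=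
  Submodule.finiteDimensional_inf_left _ _

/-- `L` and `K` form a basis of the linear forms that annihilate the nonzero quadratic class `f`. -/
structure IsAnnihilatingPencil (G : ℕ → Submodule k A) (L K f : A) : Prop where
  mem_two : f ∈ G 2
  ne_zero : f ≠ 0
  left_mem : L ∈ annIn (G 1) f
  left_ne_zero : L ≠ 0
  right_mem : K ∈ annIn (G 1) f
  right_notMem : K ∉ k ∙ L

namespace IsAnnihilatingPencil

theorem right_ne_zero (hP : IsAnnihilatingPencil G L K f) : K ≠ 0 := fun h =>
  hP.right_notMem (h ▸ zero_mem _)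

theorem of_mem (hP : IsAnnihilatingPencil G L K f) (hx : x ∈ annIn (G 1) f) (hxL : x ∉ k ∙ L) :
    IsAnnihilatingPencil G L x f :=
  { hP with right_mem := hx, right_notMem := hxL }

theorem linearIndependent (hP : IsAnnihilatingPencil G L K f) : LinearIndependent k ![L, K] :=
  (LinearIndependent.pair_iff' hP.left_ne_zero).2 fun a ha =>
    hP.right_notMem (Submodule.mem_span_singleton.2 ⟨a, ha⟩)

theorem annIn_eq_span (hP : IsAnnihilatingPencil G L K f) (hG : IsFiveQuadricGrading G) :
    annIn (G 1) f = Submodule.span k {L, K} :=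
  have := hG.finiteDimensional 1
  eq_span_pair_of_finrank_le_two (hG.finrank_annIn_le hP.mem_two hP.ne_zero) hP.left_mem
    hP.right_mem hP.left_ne_zero hP.right_notMem

theorem finrank_annIn (hP : IsAnnihilatingPencil G L K f) (hG : IsFiveQuadricGrading G) :
    Module.finrank k (annIn (G 1) f) = 2 := by
  rw [hP.annIn_eq_span hG, ← Matrix.range_cons_cons_empty,
    finrank_span_eq_card hP.linearIndependent, Fintype.card_fin]

theorem mem_of_forall_mul_mul_eq_zero (hP : IsAnnihilatingPencil G L K f)
    (hG : IsFiveQuadricGrading G) (hu : u ∈ G 1) (h : ∀ M ∈ G 1, u * M * f = 0) :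
    u ∈ annIn (G 1) f := by
  refine mem_annIn.2 ⟨hu, hG.eq_zero_of_forall_mul_eq_zero (i := 3) (by lia)
    (hG.mul_mem hu hP.mem_two) fun M hM => ?_⟩
  linear_combination h M hM

theorem three_le_finrank_syzygies (hP : IsAnnihilatingPencil G L K f)
    (hG : IsFiveQuadricGrading G) : 3 ≤ Module.finrank k (syzygies (G 1) L K) := by
  have hfin := hG.finiteDimensional
  obtain ⟨hL1, hLf⟩ := mem_annIn.1 hP.left_mem
  obtain ⟨hK1, hKf⟩ := mem_annIn.1 hP.right_mem
  have h10 := finrank_le_finrank_add_finrank (S := (G 1).prod (G 1)) (T := syzygies (G 1) L K)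
    (U := annIn (G 2) f) ((LinearMap.mulLeft k L).coprod (LinearMap.mulLeft k K))
    (fun x hx hx0 => ⟨hx, hx0⟩) fun x hx => mem_annIn.2
      ⟨add_mem (hG.mul_mem hL1 hx.1) (hG.mul_mem hK1 hx.2), by
        simp only [LinearMap.coprod_apply, LinearMap.mulLeft_apply]
        linear_combination x.1 * hLf + x.2 * hKf⟩
  have h7 := hG.finrank_annIn_two_le hP.mem_two
  rw [hP.finrank_annIn hG] at h7
  rw [finrank_submodule_prod, hG.finrank_one] at h10
  lia

theorem finrank_map_mkQ_annIn_mul_le_one (hP : IsAnnihilatingPencil G L K f)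
    (hG : IsFiveQuadricGrading G) (hw : w ∈ G 1) (hwf : w ∉ annIn (G 1) f) :
    Module.finrank k ((annIn (G 1) (w * f)).map (annIn (G 1) f).mkQ) ≤ 1 := by
  have := hG.finiteDimensional 1
  have hle : annIn (G 1) f ≤ annIn (G 1) (w * f) := fun x hx => by
    obtain ⟨hx1, hxf⟩ := mem_annIn.1 hx
    refine mem_annIn.2 ⟨hx1, ?_⟩
    linear_combination w * hxf
  have hsum := finrank_map_mkQ_add_finrank hle
  rw [hP.finrank_annIn hG] at hsum
  have h3 := hG.finrank_annIn_le (hG.mul_mem hw hP.mem_two) fun h => hwf (mem_annIn.2 ⟨hw, h⟩)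
  lia

theorem syzygy_mul_apply_eq_zero (hP : IsAnnihilatingPencil G L K f)
    (hL : IsGenericLinearForm G D L) (huv : (u, v) ∈ syzygies (G 1) L K) (hM : M ∈ G 1) :
    (u * M + v * D M K) * f = 0 := by
  have hLf := hL.mul_add_mul_eq_zero (mem_annIn.1 hP.left_mem).2 hM
  have hKf := congrArg (D M) (mem_annIn.1 hP.right_mem).2
  rw [hL.leibniz, map_zero] at hKf
  linear_combination u * hLf + v * hKf - D M f * (mem_syzygies.1 huv).2.2

theorem left_mem_of_mul_apply_eq_zero (hP : IsAnnihilatingPencil G L K f)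
    (hG : IsFiveQuadricGrading G) (hL : IsGenericLinearForm G D L)
    (huv : (u, v) ∈ syzygies (G 1) L K) (h : ∀ M ∈ G 1, v * D M K * f = 0) :
    u ∈ annIn (G 1) f := by
  refine hP.mem_of_forall_mul_mul_eq_zero hG (mem_syzygies.1 huv).1 fun M hM => ?_
  linear_combination hP.syzygy_mul_apply_eq_zero hL huv hM - h M hM

theorem left_mem_of_right_mem (hP : IsAnnihilatingPencil G L K f)
    (hG : IsFiveQuadricGrading G) (hL : IsGenericLinearForm G D L)
    (huv : (u, v) ∈ syzygies (G 1) L K) (hv : v ∈ annIn (G 1) f) : u ∈ annIn (G 1) f := by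
  refine hP.left_mem_of_mul_apply_eq_zero hG hL huv fun M _ => ?_
  linear_combination D M K * (mem_annIn.1 hv).2

theorem exists_mul_self_add_mul_eq_zero (hP : IsAnnihilatingPencil G L K f)
    (hG : IsFiveQuadricGrading G) (hmem : ∀ u v, (u, v) ∈ syzygies (G 1) L K → u ∈ annIn (G 1) f) :
    ∃ v ∈ G 1, L * L + K * v = 0 := by
  have := hG.finiteDimensional 1
  have hle : (syzygies (G 1) L K).map (LinearMap.fst k A A) ≤ annIn (G 1) f :=
    Submodule.map_le_iff_le_comap.2 fun p hp => hmem p.1 p.2 hp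
  have h3 := finrank_le_finrank_add_finrank (LinearMap.fst k A A) (S := syzygies (G 1) L K)
    (T := (annIn (G 1) K).map (LinearMap.inr k A A)) (fun p hp (hp1 : p.1 = 0) => by
      obtain ⟨-, hv, h0⟩ := mem_syzygies.1 hp
      rw [hp1, mul_zero, zero_add] at h0
      exact ⟨p.2, mem_annIn.2 ⟨hv, (mul_comm _ _).trans h0⟩, Prod.ext hp1.symm rfl⟩)
    fun p hp => Submodule.mem_map_of_mem hp
  have hK1 := (Submodule.finrank_map_le (LinearMap.inr k A A) _).trans
    (hG.finrank_annIn_le (mem_annIn.1 hP.right_mem).1 hP.right_ne_zero)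
  have hR := hP.three_le_finrank_syzygies hG
  have heq := Submodule.eq_of_le_of_finrank_le hle (by rw [hP.finrank_annIn hG]; lia)
  obtain ⟨⟨_, v⟩, hp, rfl⟩ := heq.ge hP.left_mem
  exact ⟨v, (mem_syzygies.1 hp).2⟩

variable [CharZero k]

theorem exists_apply_notMem (hP : IsAnnihilatingPencil G L K f) (hG : IsFiveQuadricGrading G)
    (hL : IsGenericLinearForm G D L) : ∃ M ∈ G 1, D M K ∉ annIn (G 1) f := by
  by_contra! hA
  have := hG.finiteDimensional 1
  have hmem (u v) (huv : (u, v) ∈ syzygies (G 1) L K) : u ∈ annIn (G 1) f :=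
    hP.left_mem_of_mul_apply_eq_zero hG hL huv fun M hM => by
      linear_combination v * (mem_annIn.1 (hA M hM)).2
  obtain ⟨v, hv, hLv⟩ := hP.exists_mul_self_add_mul_eq_zero hG hmem
  have hle : G 1 ≤ annIn (G 1) f ⊔ k ∙ v := fun M hM => by
    obtain ⟨p, r, hpr⟩ := Submodule.mem_span_pair.1
      ((hP.annIn_eq_span hG).le (hA M hM))
    have hLvM := congrArg (D M) hLv
    rw [map_add, hL.leibniz, hL.leibniz, hL.apply_self M hM, ← hpr, map_zero] at hLvM
    have hsyz : ((2 : k) • M + p • v, D M v + r • v) ∈ syzygies (G 1) L K :=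
      mem_syzygies.2 ⟨add_mem (Submodule.smul_mem _ _ hM) (Submodule.smul_mem _ _ hv),
        add_mem (hL.map_mem M hv) (Submodule.smul_mem _ _ hv), by
          simp only [Algebra.smul_def, map_ofNat] at hLvM ⊢
          linear_combination hLvM⟩
    have hMv := Submodule.add_mem_sup (hmem _ _ hsyz)
      (Submodule.smul_mem _ (-p) (Submodule.mem_span_singleton_self v))
    rw [neg_smul, add_neg_cancel_right] at hMv
    exact (Submodule.smul_mem_iff _ two_ne_zero).1 hMv
  have h5 := hG.five_le_of_le_sup hle
  have h1 := finrank_span_singleton_le_one (k := k) v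
  rw [hP.finrank_annIn hG] at h5
  lia

theorem mul_self_ne_zero (hP : IsAnnihilatingPencil G L K f) (hG : IsFiveQuadricGrading G)
    (hL : IsGenericLinearForm G D L) : K * K ≠ 0 := fun hKK => by
  have := hG.finiteDimensional 1
  have hK1 := (mem_annIn.1 hP.right_mem).1
  obtain ⟨M, -, hM⟩ := hP.exists_apply_notMem hG hL
  have hann := eq_span_singleton_of_finrank_le_one (hG.finrank_annIn_le hK1 hP.right_ne_zero)
    (mem_annIn.2 ⟨hK1, hKK⟩) hP.right_ne_zero
  have hMK := hann.le (mem_annIn.2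
    ⟨hL.map_mem M hK1, (mul_comm _ _).trans (hL.mul_apply_eq_zero hKK M)⟩)
  exact hM ((Submodule.span_singleton_le_iff_mem _ _).2 hP.right_mem hMK)

theorem mul_ne_zero_of_notMem (hP : IsAnnihilatingPencil G L K f) (hG : IsFiveQuadricGrading G)
    (hL : IsGenericLinearForm G D L) (hx : x ∈ annIn (G 1) f) (hxL : x ∉ k ∙ L)
    (hxK : x ∉ k ∙ K) : K * x ≠ 0 := fun h0 => by
  have := hG.finiteDimensional 1
  have hx1 := (mem_annIn.1 hx).1
  have hK1 := (mem_annIn.1 hP.right_mem).1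
  have hK2 := hG.finrank_annIn_le (hG.mul_mem hK1 hK1) (hP.mul_self_ne_zero hG hL)
  have hx2 := hG.finrank_annIn_le (hG.mul_mem hx1 hx1) ((hP.of_mem hx hxL).mul_self_ne_zero hG hL)
  obtain ⟨α, β, hαβ⟩ := Submodule.mem_span_pair.1 ((eq_span_pair_of_finrank_le_two
    (hP.finrank_annIn hG).le hP.right_mem hx hP.right_ne_zero hxK).le hP.left_mem)
  have hle : G 1 ≤ annIn (G 1) (x * x) ⊔ annIn (G 1) (K * K) := fun M hM => by
    obtain ⟨δ, hδ⟩ := hL.exists_map_smul M α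
    obtain ⟨ε, hε⟩ := hL.exists_map_smul M β
    have hKx := congrArg (D M) h0
    rw [hL.leibniz, map_zero] at hKx
    rw [← hL.apply_self M hM, ← hαβ, map_add, hδ, hε]
    refine Submodule.add_mem_sup (add_mem (Submodule.smul_mem _ _ ?_) (Submodule.smul_mem _ _ ?_))
      (add_mem (Submodule.smul_mem _ _ ?_) (Submodule.smul_mem _ _ ?_))
    · exact mem_annIn.2 ⟨hK1, by linear_combination x * h0⟩
    · exact mem_annIn.2 ⟨hL.map_mem M hK1, by linear_combination x * hKx - D M x * h0⟩
    · exact mem_annIn.2 ⟨hx1, by linear_combination K * h0⟩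
    · exact mem_annIn.2 ⟨hL.map_mem M hx1, by linear_combination K * hKx - D M K * h0⟩
  have h5 := hG.five_le_of_le_sup hle
  lia

theorem eq_zero_or_eq_zero_of_mul_eq_zero (hP : IsAnnihilatingPencil G L K f)
    (hG : IsFiveQuadricGrading G) (hL : IsGenericLinearForm G D L) (hx : x ∈ annIn (G 1) f)
    (hy : y ∈ annIn (G 1) f) (h0 : x * y = 0) : x = 0 ∨ y = 0 := by
  have hleft {a b : A} (ha : a ∈ k ∙ L) (hb : b ∈ annIn (G 1) f) (hab : a * b = 0) :
      a = 0 ∨ b = 0 := by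
    obtain ⟨c, rfl⟩ := Submodule.mem_span_singleton.1 ha
    rcases smul_eq_zero.1 ((smul_mul_assoc c L b).symm.trans hab) with rfl | hLb
    · exact Or.inl (zero_smul k L)
    · exact Or.inr (hL.eq_zero_of_mul_eq_zero_of_mem_one hG (mem_annIn.1 hb).1 hLb)
  by_cases hxL : x ∈ k ∙ L
  · exact hleft hxL hy h0
  by_cases hyL : y ∈ k ∙ L
  · exact (hleft hyL hx ((mul_comm _ _).trans h0)).symm
  by_cases hyx : y ∈ k ∙ x
  · obtain ⟨c, rfl⟩ := Submodule.mem_span_singleton.1 hyx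
    rw [mul_smul_comm] at h0
    exact Or.inr (smul_eq_zero_of_left ((smul_eq_zero.1 h0).resolve_right
      ((hP.of_mem hx hxL).mul_self_ne_zero hG hL)) x)
  · exact absurd h0 ((hP.of_mem hx hxL).mul_ne_zero_of_notMem hG hL hy hyL hyx)

end IsAnnihilatingPencil

end Pencil

section PencilOverAlgebraicallyClosedField

variable {k A : Type*} [Field k] [IsAlgClosed k] [CharZero k] [CommRing A] [Algebra k A]
  {G : ℕ → Submodule k A} {D : A →ₗ[k] A →+ A} {L K f u v : A}

namespace IsAnnihilatingPencil

theorem coeff_eq_zero_of_quadratic_eq_zero (hP : IsAnnihilatingPencil G L K f)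
    (hG : IsFiveQuadricGrading G) (hL : IsGenericLinearForm G D L) {a b c : k}
    (h0 : a • (L * L) + b • (L * K) + c • (K * K) = 0) : a = 0 ∧ b = 0 ∧ c = 0 := by
  have hmem (s t : k) : s • L + t • K ∈ annIn (G 1) f :=
    add_mem (Submodule.smul_mem _ _ hP.left_mem) (Submodule.smul_mem _ _ hP.right_mem)
  by_cases ha : a = 0
  · subst ha
    have hprod : K * (b • L + c • K) = 0 := by
      simp only [Algebra.smul_def, map_zero] at h0 ⊢
      linear_combination h0
    have hbc := (hP.eq_zero_or_eq_zero_of_mul_eq_zero hG hL hP.right_mem (hmem b c)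
      hprod).resolve_left hP.right_ne_zero
    exact ⟨rfl, LinearIndependent.pair_iff.1 hP.linearIndependent _ _ hbc⟩
  obtain ⟨s, hs⟩ := IsAlgClosed.exists_eq_mul_self (discrim a b c)
  obtain ⟨t, ht⟩ := exists_quadratic_eq_zero ha ⟨s, hs⟩
  have hprod : ((1 : k) • L + (-t) • K) * (a • L + (a * t + b) • K) = 0 := by
    have ht' := congrArg (algebraMap k A) ht
    simp only [Algebra.smul_def, map_zero, map_add, map_mul, map_one, map_neg] at h0 ht' ⊢
    linear_combination h0 - K * K * ht'
  rcases hP.eq_zero_or_eq_zero_of_mul_eq_zero hG hL (hmem _ _) (hmem _ _) hprod with h | h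
  · exact absurd (LinearIndependent.pair_iff.1 hP.linearIndependent _ _ h).1 one_ne_zero
  · exact absurd (LinearIndependent.pair_iff.1 hP.linearIndependent _ _ h).1 ha

theorem mem_span_of_mem_syzygies (hP : IsAnnihilatingPencil G L K f)
    (hG : IsFiveQuadricGrading G) (hL : IsGenericLinearForm G D L)
    (huv : (u, v) ∈ syzygies (G 1) L K) (hu : u ∈ annIn (G 1) f) (hv : v ∈ annIn (G 1) f) :
    (u, v) ∈ k ∙ (K, -L) := by
  rw [hP.annIn_eq_span hG] at hu hv
  obtain ⟨α, β, rfl⟩ := Submodule.mem_span_pair.1 hu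
  obtain ⟨γ, δ, rfl⟩ := Submodule.mem_span_pair.1 hv
  obtain ⟨rfl, hβγ, rfl⟩ := hP.coeff_eq_zero_of_quadratic_eq_zero hG hL (a := α) (b := β + γ)
    (c := δ) (by
      have h0 := (mem_syzygies.1 huv).2.2
      simp only [Algebra.smul_def, map_add] at h0 ⊢
      linear_combination h0)
  refine Submodule.mem_span_singleton.2 ⟨β, ?_⟩
  rw [Prod.smul_mk, smul_neg, ← neg_smul, ← eq_neg_of_add_eq_zero_right hβγ, zero_smul, zero_smul,
    zero_add, add_zero]

theorem exists_syzygy (hP : IsAnnihilatingPencil G L K f) (hG : IsFiveQuadricGrading G)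
    (hL : IsGenericLinearForm G D L) {U : Submodule k (A ⧸ annIn (G 1) f)} [FiniteDimensional k U]
    (hU : Module.finrank k U ≤ 1) (φ : A × A →ₗ[k] A)
    (hφ : ∀ p ∈ syzygies (G 1) L K, (annIn (G 1) f).mkQ (φ p) ∈ U) :
    ∃ u v, (u, v) ∈ syzygies (G 1) L K ∧ φ (u, v) ∈ annIn (G 1) f ∧
      ¬(u ∈ annIn (G 1) f ∧ v ∈ annIn (G 1) f) := by
  by_contra! hno
  have := hG.finiteDimensional 1
  have h3 := finrank_le_finrank_add_finrank (S := syzygies (G 1) L K) (T := k ∙ (K, -L)) (U := U)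
    ((annIn (G 1) f).mkQ ∘ₗ φ) (fun p hp hp0 => by
      obtain ⟨hu, hv⟩ := hno p.1 p.2 hp ((Submodule.Quotient.mk_eq_zero _).1 hp0)
      exact hP.mem_span_of_mem_syzygies hG hL hp hu hv) hφ
  have h1 := finrank_span_singleton_le_one (k := k) (K, -L)
  have hR := hP.three_le_finrank_syzygies hG
  lia

theorem right_mem_of_left_mem (hP : IsAnnihilatingPencil G L K f) (hG : IsFiveQuadricGrading G)
    (hL : IsGenericLinearForm G D L) (huv : (u, v) ∈ syzygies (G 1) L K)
    (hu : u ∈ annIn (G 1) f) : v ∈ annIn (G 1) f := by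
  by_contra hv
  have := hG.finiteDimensional 1
  have hK1 := (mem_annIn.1 hP.right_mem).1
  have hUv := hP.finrank_map_mkQ_annIn_mul_le_one hG (mem_syzygies.1 huv).2.1 hv
  have hleft {u' v' : A} (huv' : (u', v') ∈ syzygies (G 1) L K) : u' ∈ annIn (G 1) f := by
    by_contra hu'
    have hu1 := (mem_syzygies.1 huv').1
    have h5 := hG.five_le_finrank_add_finrank (T := annIn (G 1) (u' * f))
      (U := (annIn (G 1) (v * f)).map (annIn (G 1) f).mkQ)
      ((annIn (G 1) f).mkQ ∘ₗ derAt D K) (fun M hM hMK => mem_annIn.2 ⟨hM, ?_⟩)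
      fun M hM => Submodule.mem_map_of_mem (mem_annIn.2 ⟨hL.map_mem M hK1, ?_⟩)
    · have h3 := hG.finrank_annIn_le (hG.mul_mem hu1 hP.mem_two)
        fun h => hu' (mem_annIn.2 ⟨hu1, h⟩)
      lia
    · have hMf := (mem_annIn.1 ((Submodule.Quotient.mk_eq_zero _).1 hMK)).2
      change D M K * f = 0 at hMf
      linear_combination hP.syzygy_mul_apply_eq_zero hL huv' hM - v' * hMf
    · change D M K * (v * f) = 0
      linear_combination hP.syzygy_mul_apply_eq_zero hL huv hM - M * (mem_annIn.1 hu).2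
  obtain ⟨M, hM, hMK⟩ := hP.exists_apply_notMem hG hL
  obtain ⟨u', v', huv', hv', hno⟩ := hP.exists_syzygy hG hL
    (hP.finrank_map_mkQ_annIn_mul_le_one hG (hL.map_mem M hK1) hMK) (LinearMap.snd k A A)
    fun p hp => Submodule.mem_map_of_mem (mem_annIn.2 ⟨hp.1.2, by
      have hpf := hP.syzygy_mul_apply_eq_zero hL hp hM
      rw [LinearMap.snd_apply]
      linear_combination hpf - M * (mem_annIn.1 (hleft hp)).2⟩)
  exact hno ⟨hleft huv', hv'⟩

theorem exists_smul_sub_mem (hP : IsAnnihilatingPencil G L K f) (hG : IsFiveQuadricGrading G)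
    (hL : IsGenericLinearForm G D L) :
    ∃ M ∈ G 1, ∃ w ∈ G 1, w ∉ annIn (G 1) f ∧ ∃ s t : k, (s, t) ≠ 0 ∧
      M - s • w ∈ annIn (G 1) f ∧ D M K - t • w ∈ annIn (G 1) f := by
  have := hG.finiteDimensional 1
  have hK1 := (mem_annIn.1 hP.right_mem).1
  by_cases hstable : ∀ M ∈ annIn (G 1) f, derAt D K M ∈ annIn (G 1) f
  · have hne : ¬G 1 ≤ annIn (G 1) f := fun hle => by
      have h5 := Submodule.finrank_mono hle
      rw [hG.finrank_one, hP.finrank_annIn hG] at h5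
      lia
    obtain ⟨M, hM, hMf, t, ht⟩ := exists_apply_sub_smul_mem (derAt D K) hne hstable
      fun M _ => hL.map_mem M hK1
    refine ⟨M, hM, M, hM, hMf, 1, t, by simp, ?_, ht⟩
    rw [one_smul, sub_self]
    exact zero_mem _
  · push Not at hstable
    obtain ⟨M, hM, hMK⟩ := hstable
    refine ⟨M, (mem_annIn.1 hM).1, D M K, hL.map_mem M hK1, hMK, 0, 1, by simp, ?_, ?_⟩
    · rwa [zero_smul, sub_zero]
    · rw [one_smul, sub_self]
      exact zero_mem _

theorem not_isGenericLinearForm (hP : IsAnnihilatingPencil G L K f)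
    (hG : IsFiveQuadricGrading G) : ¬IsGenericLinearForm G D L := fun hL => by
  have := hG.finiteDimensional 1
  obtain ⟨M, hM, w, hw, hwf, s, t, hst, hMs, hMt⟩ := hP.exists_smul_sub_mem hG hL
  obtain ⟨u, v, huv, hmem, hno⟩ := hP.exists_syzygy hG hL
    (hP.finrank_map_mkQ_annIn_mul_le_one hG hw hwf)
    (s • LinearMap.fst k A A + t • LinearMap.snd k A A) fun p hp => Submodule.mem_map_of_mem
      (mem_annIn.2 ⟨add_mem (Submodule.smul_mem _ _ hp.1.1) (Submodule.smul_mem _ _ hp.1.2), by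
        have hpf := hP.syzygy_mul_apply_eq_zero hL hp hM
        have hMs' := (mem_annIn.1 hMs).2
        have hMt' := (mem_annIn.1 hMt).2
        simp only [LinearMap.add_apply, LinearMap.smul_apply, LinearMap.fst_apply,
          LinearMap.snd_apply, Algebra.smul_def] at hMs' hMt' ⊢
        linear_combination hpf - p.1 * hMs' - p.2 * hMt'⟩)
  obtain ⟨hu1, hv1, h0⟩ := mem_syzygies.1 huv
  replace hmem : s • u + t • v ∈ annIn (G 1) f := hmem
  by_cases hs : s = 0
  · subst hs
    have ht : t ≠ 0 := fun ht => hst (by rw [ht]; rfl)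
    rw [zero_smul, zero_add, Submodule.smul_mem_iff _ ht] at hmem
    exact hno ⟨hP.left_mem_of_right_mem hG hL huv hmem, hmem⟩
  have hu : u + (s⁻¹ * t) • v ∈ annIn (G 1) f := by
    rwa [← Submodule.smul_mem_iff _ hs, smul_add, smul_smul, mul_inv_cancel_left₀ hs]
  have hP' : IsAnnihilatingPencil G L (K - (s⁻¹ * t) • L) f :=
    hP.of_mem (sub_mem hP.right_mem (Submodule.smul_mem _ _ hP.left_mem)) fun h =>
      hP.right_notMem ((Submodule.sub_mem_iff_left _
        (Submodule.smul_mem _ _ (Submodule.mem_span_singleton_self L))).1 h)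
  have hv := hP'.right_mem_of_left_mem hG hL (mem_syzygies.2
    ⟨add_mem hu1 (Submodule.smul_mem _ _ hv1), hv1, by
      simp only [Algebra.smul_def]
      linear_combination h0⟩) hu
  exact hno ⟨(Submodule.add_mem_iff_left _ (Submodule.smul_mem _ _ hv)).1 hu, hv⟩

end IsAnnihilatingPencil

theorem IsGenericLinearForm.eq_zero_of_mul_eq_zero (hL : IsGenericLinearForm G D L)
    (hG : IsFiveQuadricGrading G) (hf : f ∈ G 2) (h : L * f = 0) : f = 0 := by
  by_contra hf0
  have := hG.finiteDimensional 1
  have hL0 := hL.ne_zero hG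
  have hne : ¬annIn (G 1) f ≤ k ∙ L := fun hle =>
    (hL.one_lt_finrank_annIn hG hf hf0 h).not_ge
      ((Submodule.finrank_mono hle).trans (finrank_span_singleton_le_one L))
  obtain ⟨K, hK, hKL⟩ := SetLike.not_le_iff_exists.1 hne
  have hP : IsAnnihilatingPencil G L K f :=
    ⟨hf, hf0, mem_annIn.2 ⟨hL.mem, h⟩, hL0, hK, hKL⟩
  exact hP.not_isGenericLinearForm hG hL

end PencilOverAlgebraicallyClosedField

section GenericField

theorem exists_derivation_forall_algebraMap_eq {R S T : Type*} [CommRing R] [CommRing S]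
    [CommRing T] [Algebra R S] [Algebra R T] [Algebra S T] [IsScalarTower R S T]
    [Algebra.FormallyEtale S T] (d : Derivation R S T) :
    ∃ d' : Derivation R T T, ∀ x : S, d' (algebraMap S T x) = d x := by
  have hb := KaehlerDifferential.isBaseChange_of_formallyEtale R S T
  refine ⟨(hb.lift d.liftKaehlerDifferential).compDer (KaehlerDifferential.D R T), fun x => ?_⟩
  have hx := hb.lift_eq d.liftKaehlerDifferential (KaehlerDifferential.D R S x)
  rwa [KaehlerDifferential.map_D, Derivation.liftKaehlerDifferential_comp_D] at hx

theorem exists_isAlgClosed_derivation_apply_eq_single.{u, v} (k : Type u) [Field k]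
    [CharZero k] (n : Type v) [DecidableEq n] :
    ∃ (K : Type max u v) (_ : Field K) (_ : Algebra k K) (t : n → K) (d : n → Derivation k K K),
      IsAlgClosed K ∧ ∀ i j, d i (t j) = (Pi.single i 1 : n → K) j := by
  let P := MvPolynomial n k
  let F := FractionRing P
  let K := AlgebraicClosure F
  have : Algebra.FormallyEtale F K := Algebra.FormallyEtale.of_isSeparable F K
  have : Algebra.FormallyEtale P K := Algebra.FormallyEtale.comp P F K
  choose d hd using fun i : n => exists_derivation_forall_algebraMap_eq
    (mkDerivation k (Pi.single i 1 : n → K))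
  refine ⟨K, inferInstance, inferInstance, fun i => algebraMap P K (X i), d, inferInstance,
    fun i j => ?_⟩
  rw [hd, mkDerivation_X]

end GenericField

section CoefficientwiseDerivation

variable {σ k K : Type*} [Field k] [Field K] [Algebra k K] {I : Ideal (MvPolynomial σ k)}

/-- The derivation of a polynomial ring that applies a derivation of the coefficient field to every
coefficient. -/
def mapCoeff (d : Derivation k K K) : Derivation k (MvPolynomial σ K) (MvPolynomial σ K) :=
  Derivation.mk' ((AddMonoidAlgebra.coeffLinearEquiv k).symm.toLinearMap ∘ₗ
    Finsupp.mapRange.linearMap d.toLinearMap ∘ₗ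
      (AddMonoidAlgebra.coeffLinearEquiv k).toLinearMap) fun p r => by
    classical
    ext m
    rw [smul_eq_mul, smul_eq_mul, mul_comm r, coeff_add, coeff_mul, coeff_mul,
      ← Finset.sum_add_distrib]
    change d (coeff m (p * r)) = _
    rw [coeff_mul, map_sum]
    refine Finset.sum_congr rfl fun x _ => ?_
    rw [d.leibniz, smul_eq_mul, smul_eq_mul, mul_comm (coeff x.2 r)]
    rfl

theorem coeff_mapCoeff (d : Derivation k K K) (p : MvPolynomial σ K) (m : σ →₀ ℕ) :
    coeff m (mapCoeff d p) = d (coeff m p) :=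
  rfl

theorem mapCoeff_C (d : Derivation k K K) (c : K) :
    mapCoeff d (C c : MvPolynomial σ K) = C (d c) := by
  classical
  ext m
  rw [coeff_mapCoeff, coeff_C, coeff_C, apply_ite d, map_zero]

theorem mapCoeff_map (d : Derivation k K K) (p : MvPolynomial σ k) :
    mapCoeff d (map (algebraMap k K) p) = 0 := by
  ext m
  rw [coeff_mapCoeff, coeff_map, Derivation.map_algebraMap, coeff_zero]

theorem mapCoeff_lin {n : Type*} [Fintype n] (d : Derivation k K K) (c : n → K) :
    mapCoeff d (lin c) = lin fun i => d (c i) := by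
  rw [lin_apply, lin_apply, map_sum]
  refine Finset.sum_congr rfl fun i _ => ?_
  rw [Derivation.leibniz, mapCoeff_C, ← map_X (algebraMap k K), mapCoeff_map, smul_zero, zero_add,
    smul_eq_mul, mul_comm]

theorem isHomogeneous_mapCoeff (d : Derivation k K K) {p : MvPolynomial σ K} {e : ℕ}
    (hp : p.IsHomogeneous e) : (mapCoeff d p).IsHomogeneous e := fun m hm =>
  hp fun h => hm (by rw [coeff_mapCoeff, h, map_zero])

theorem mapCoeff_mem (d : Derivation k K K) {p : MvPolynomial σ K}
    (hp : p ∈ I.map (map (algebraMap k K))) : mapCoeff d p ∈ I.map (map (algebraMap k K)) := by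
  induction hp using Submodule.span_induction with
  | mem x hx =>
    obtain ⟨r, -, rfl⟩ := hx
    rw [mapCoeff_map]
    exact zero_mem _
  | zero =>
    rw [map_zero]
    exact zero_mem _
  | add x y _ _ hx hy =>
    rw [map_add]
    exact add_mem hx hy
  | smul c x hmem hx =>
    rw [smul_eq_mul, Derivation.leibniz]
    exact add_mem (Ideal.mul_mem_left _ _ hx) (Ideal.mul_mem_right _ _ hmem)

/-- The action of `mapCoeff d` on the quotient by an ideal defined over the field of constants. -/
def quotientMapCoeff (I : Ideal (MvPolynomial σ k)) (d : Derivation k K K) :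
    MvPolynomial σ K ⧸ I.map (map (algebraMap k K)) →+
      MvPolynomial σ K ⧸ I.map (map (algebraMap k K)) :=
  QuotientAddGroup.map _ _ (mapCoeff d).toLinearMap.toAddMonoidHom fun _ hp => mapCoeff_mem d hp

theorem quotientMapCoeff_mk (d : Derivation k K K) (p : MvPolynomial σ K) :
    quotientMapCoeff I d (Ideal.Quotient.mk _ p) = Ideal.Quotient.mk _ (mapCoeff d p) :=
  rfl

theorem quotientMapCoeff_mul (d : Derivation k K K)
    (a b : MvPolynomial σ K ⧸ I.map (map (algebraMap k K))) :
    quotientMapCoeff I d (a * b) = a * quotientMapCoeff I d b + b * quotientMapCoeff I d a := by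
  obtain ⟨p, rfl⟩ := Ideal.Quotient.mk_surjective a
  obtain ⟨r, rfl⟩ := Ideal.Quotient.mk_surjective b
  rw [← map_mul, quotientMapCoeff_mk, Derivation.leibniz, map_add]
  rfl

theorem quotientMapCoeff_smul (d : Derivation k K K) (c : K)
    (a : MvPolynomial σ K ⧸ I.map (map (algebraMap k K))) :
    quotientMapCoeff I d (c • a) = d c • a + c • quotientMapCoeff I d a := by
  have hC (r : K) (b : MvPolynomial σ K ⧸ I.map (map (algebraMap k K))) :
      r • b = Ideal.Quotient.mk _ (C r) * b := Algebra.smul_def r b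
  rw [hC, hC, hC, quotientMapCoeff_mul, quotientMapCoeff_mk, mapCoeff_C, add_comm, mul_comm a]

theorem quotientMapCoeff_mem_piece (d : Derivation k K K) {i : ℕ}
    {a : MvPolynomial σ K ⧸ I.map (map (algebraMap k K))} (ha : a ∈ piece _ i) :
    quotientMapCoeff I d a ∈ piece _ i := by
  obtain ⟨p, hp, rfl⟩ := mem_piece.1 ha
  exact mem_piece.2 ⟨_, isHomogeneous_mapCoeff d hp, rfl⟩

theorem quotientMapCoeff_linClass {n : Type*} [Fintype n] {I : Ideal (MvPolynomial n k)}
    (d : Derivation k K K) (c : n → K) :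
    quotientMapCoeff I d (linClass _ c) = linClass _ fun i => d (c i) :=
  congrArg (Ideal.Quotient.mk _) (mapCoeff_lin d c)

end CoefficientwiseDerivation

section GenericCoordinates

variable {k K : Type*} [Field k] [Field K] [Algebra k K]

theorem isGenericLinearForm_linClass {n : Type*} [Fintype n] [DecidableEq n]
    {I : Ideal (MvPolynomial n k)}
    (hinj : Function.Injective (linClass (I.map (map (algebraMap k K))))) {t : n → K}
    {d : n → Derivation k K K} (hd : ∀ i j, d i (t j) = (Pi.single i 1 : n → K) j) :
    ∃ D, IsGenericLinearForm (piece (I.map (map (algebraMap k K)))) D (linClass _ t) := by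
  obtain ⟨g, hg⟩ := LinearMap.exists_leftInverse_of_injective _ (LinearMap.ker_eq_bot.2 hinj)
  let D := ∑ i, LinearMap.toSpanSingleton K _ (quotientMapCoeff I (d i)) ∘ₗ LinearMap.proj i ∘ₗ g
  have hD (M a) : D M a = ∑ i, g M i • quotientMapCoeff I (d i) a := by
    simp [D, LinearMap.sum_apply]
  refine ⟨D, (range_linClass _).le ⟨t, rfl⟩, fun M a b => ?_, fun M i a ha => ?_, fun M hM => ?_,
    fun M c => ⟨∑ i, g M i * d i c, fun a => ?_⟩⟩
  · simp only [hD, quotientMapCoeff_mul, smul_add, Finset.sum_add_distrib, Finset.mul_sum,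
      mul_smul_comm]
  · rw [hD]
    exact sum_mem fun j _ => Submodule.smul_mem _ _ (quotientMapCoeff_mem_piece (d j) ha)
  · obtain ⟨c, rfl⟩ := (range_linClass _).ge hM
    have hgc : g (linClass _ c) = c := LinearMap.congr_fun hg c
    simp only [hD, hgc, quotientMapCoeff_linClass, hd]
    rw [linClass_eq_sum c]
    exact Finset.sum_congr rfl fun i _ => congrArg (c i • ·) (linClass_single _ i)
  · simp only [hD, quotientMapCoeff_smul, smul_add, Finset.sum_add_distrib, Finset.sum_smul,
      Finset.smul_sum, mul_smul, smul_comm c]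

theorem eq_zero_of_forall_eval_map {n : Type*} [Finite n] [IsAlgClosed k]
    {ι : Type*} {q : ι → MvPolynomial n k}
    (h0 : ∀ p : n → k, (∀ i, eval p (q i) = 0) → p = 0)
    (p : n → K) (hp : ∀ i, eval p (map (algebraMap k K) (q i)) = 0) : p = 0 := by
  obtain ⟨N, hN⟩ := exists_forall_isHomogeneous_mem h0
  have hle : Ideal.span (Set.range q) ≤ RingHom.ker (eval₂Hom (algebraMap k K) p) := by
    refine Ideal.span_le.2 (Set.range_subset_iff.2 fun i => ?_)
    exact (eval_map _ _ _).symm.trans (hp i)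
  funext j
  have hj := hle (hN N le_rfl (X j ^ N) (isHomogeneous_X_pow j N))
  rw [RingHom.mem_ker, map_pow, eval₂Hom_X'] at hj
  exact eq_zero_of_pow_eq_zero hj

variable {q : Fin 5 → MvPolynomial (Fin 5) k}

theorem eq_zero_of_linClass_mul_eq_zero_of_derivation [IsAlgClosed k] [IsAlgClosed K] [CharZero K]
    (hq : ∀ i, (q i).IsHomogeneous 2)
    (h0 : ∀ p : Fin 5 → k, (∀ i, eval p (q i) = 0) → p = 0) {t : Fin 5 → K}
    {d : Fin 5 → Derivation k K K} (hd : ∀ i j, d i (t j) = (Pi.single i 1 : Fin 5 → K) j)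
    {v : MvPolynomial (Fin 5) K ⧸ (Ideal.span (Set.range q)).map (map (algebraMap k K))}
    (hv : v ∈ piece _ 2) (h : linClass _ t * v = 0) : v = 0 := by
  have hI : (Ideal.span (Set.range q)).map (map (algebraMap k K)) =
      Ideal.span (Set.range fun i => map (algebraMap k K) (q i)) := by
    rw [Ideal.map_span, ← Set.range_comp]
    rfl
  have hqK (i) : (map (algebraMap k K) (q i)).IsHomogeneous 2 := (hq i).map _
  obtain ⟨D, hD⟩ := isGenericLinearForm_linClass (hI ▸ linClass_injective hqK le_rfl) hd
  exact hD.eq_zero_of_mul_eq_zero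
    (hI ▸ isFiveQuadricGrading_piece hqK (eq_zero_of_forall_eval_map h0)) hv h

end GenericCoordinates

open scoped TensorProduct

section GenericElement

variable {k n : Type*} [Field k] [Fintype n]

theorem aeval_det_sum_X_smul {S κ : Type*} [CommRing S] [Algebra k S] [Fintype κ] [DecidableEq κ]
    (N : n → Matrix κ κ k) (c : n → S) :
    aeval c (∑ i, (X i : MvPolynomial n k) • (N i).map C).det =
      (∑ i, c i • (N i).map (algebraMap k S)).det := by
  rw [AlgHom.map_det]
  congr 1
  ext a b
  simp [Matrix.sum_apply]

theorem injective_iff_det_toMatrix_ne_zero {V W κ : Type*} [AddCommGroup V] [Module k V]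
    [AddCommGroup W] [Module k W] [Fintype κ] [DecidableEq κ] (b : Module.Basis κ k V)
    (b' : Module.Basis κ k W) (F : V →ₗ[k] W) :
    Function.Injective F ↔ (LinearMap.toMatrix b b' F).det ≠ 0 := by
  have hcomp : (LinearMap.toMatrix b b' F).mulVec ∘ b.equivFun = b'.equivFun ∘ F :=
    _root_.funext fun x => LinearMap.toMatrix_mulVec_repr b b' F x
  rw [← isUnit_iff_ne_zero, ← Matrix.isUnit_iff_isUnit_det, ← Matrix.mulVec_injective_iff_isUnit,
    ← Function.Injective.of_comp_iff' _ b.equivFun.bijective, hcomp,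
    b'.equivFun.injective.of_comp_iff]

theorem exists_forall_injective_sum_smul {V W K : Type*} [AddCommGroup V] [Module k V]
    [FiniteDimensional k V] [AddCommGroup W] [Module k W] [FiniteDimensional k W] [Field K]
    [Algebra k K] (hVW : Module.finrank k V = Module.finrank k W) (T : n → V →ₗ[k] W) {t : n → K}
    (ht : Function.Injective (∑ i, t i • (T i).baseChange K : K ⊗[k] V →ₗ[K] K ⊗[k] W)) :
    ∃ f : MvPolynomial n k, f ≠ 0 ∧
      ∀ c, eval c f ≠ 0 → Function.Injective (∑ i, c i • T i : V →ₗ[k] W) := by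
  let b := Module.finBasis k V
  let b' := (Module.finBasis k W).reindex (finCongr hVW.symm)
  refine ⟨(∑ i, (X i : MvPolynomial n k) • (LinearMap.toMatrix b b' (T i)).map C).det,
    fun h0 => ?_, fun c hc => ?_⟩
  · rw [injective_iff_det_toMatrix_ne_zero (Algebra.TensorProduct.basis K b)
      (Algebra.TensorProduct.basis K b')] at ht
    refine ht ?_
    simp only [map_sum, map_smul, LinearMap.toMatrix_baseChange]
    rw [← aeval_det_sum_X_smul, h0, map_zero]
  · rw [injective_iff_det_toMatrix_ne_zero b b']
    rw [← coe_aeval_eq_eval, RingHom.coe_coe, aeval_det_sum_X_smul] at hc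
    simpa only [map_sum, map_smul, Algebra.algebraMap_self, RingHom.coe_id, Matrix.map_id] using hc

end GenericElement

section BaseChange

variable {σ k : Type*} (K : Type*) [Field k] [Field K] [Algebra k K]

/-- Extension of scalars commutes with passing to a quotient of a polynomial ring. -/
def quotientBaseChangeEquiv (I : Ideal (MvPolynomial σ k)) :
    K ⊗[k] (MvPolynomial σ k ⧸ I) ≃ₐ[K] MvPolynomial σ K ⧸ I.map (map (algebraMap k K)) :=
  (Algebra.TensorProduct.tensorQuotientEquiv K (MvPolynomial σ k) K I).trans
    (Ideal.quotientEquivAlg _ _ (algebraTensorAlgEquiv k K) <| by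
      rw [← Ideal.map_coe Algebra.TensorProduct.includeRight, Ideal.map_map]
      congr 1
      ext <;> simp)

theorem quotientBaseChangeEquiv_tmul_mk (I : Ideal (MvPolynomial σ k)) (c : K)
    (p : MvPolynomial σ k) :
    quotientBaseChangeEquiv K I (c ⊗ₜ Ideal.Quotient.mk I p) =
      c • Ideal.Quotient.mk _ (map (algebraMap k K) p) := by
  change Ideal.Quotient.mk _ (algebraTensorAlgEquiv k K (c ⊗ₜ p)) = _
  rw [algebraTensorAlgEquiv_tmul]
  rfl

end BaseChange

section GeneralLinearForm

variable {k n : Type*} [Field k]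

/-- Multiplication by the variable `X j` on a graded piece. -/
def mulX (I : Ideal (MvPolynomial n k)) (i : ℕ) (j : n) : piece I i →ₗ[k] piece I (i + 1) :=
  (LinearMap.mulRight k (Ideal.Quotient.mk I (X j))).restrict fun _ hv =>
    mul_mem_piece hv (mem_piece.2 ⟨X j, isHomogeneous_X k j, rfl⟩)

theorem coe_mulX (I : Ideal (MvPolynomial n k)) (i : ℕ) (j : n) (v : piece I i) :
    (mulX I i j v : MvPolynomial n k ⧸ I) = v * Ideal.Quotient.mk I (X j) :=
  rfl

theorem coe_sum_smul_mulX [Fintype n] (I : Ideal (MvPolynomial n k)) (i : ℕ) (c : n → k)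
    (v : piece I i) :
    ((∑ j, c j • mulX I i j) v : MvPolynomial n k ⧸ I) = linClass I c * v := by
  rw [linClass_eq_sum, Finset.sum_mul, LinearMap.sum_apply, Submodule.coe_sum]
  exact Finset.sum_congr rfl fun j _ => by
    rw [LinearMap.smul_apply, Submodule.coe_smul, coe_mulX, smul_mul_assoc, mul_comm]

variable (K : Type*) [Field K] [Algebra k K]

/-- The embedding of the extension of scalars of a graded piece of `k[X] / I` into
`K[X] / I K[X]`. -/
def pieceBaseChange (I : Ideal (MvPolynomial n k)) (i : ℕ) :
    K ⊗[k] piece I i →ₗ[K] MvPolynomial n K ⧸ I.map (map (algebraMap k K)) :=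
  (quotientBaseChangeEquiv K I).toLinearMap ∘ₗ (piece I i).subtype.baseChange K

theorem pieceBaseChange_tmul (I : Ideal (MvPolynomial n k)) (i : ℕ) (c : K) (v : piece I i) :
    pieceBaseChange K I i (c ⊗ₜ v) =
      quotientBaseChangeEquiv K I (c ⊗ₜ (v : MvPolynomial n k ⧸ I)) :=
  rfl

theorem pieceBaseChange_injective (I : Ideal (MvPolynomial n k)) (i : ℕ) :
    Function.Injective (pieceBaseChange K I i) :=
  (quotientBaseChangeEquiv K I).injective.comp
    (Module.Flat.lTensor_preserves_injective_linearMap _ (piece I i).injective_subtype)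

theorem pieceBaseChange_mem (I : Ideal (MvPolynomial n k)) (i : ℕ) (z : K ⊗[k] piece I i) :
    pieceBaseChange K I i z ∈ piece (I.map (map (algebraMap k K))) i := by
  induction z with
  | zero =>
    rw [map_zero]
    exact zero_mem _
  | add x y hx hy =>
    rw [map_add]
    exact add_mem hx hy
  | tmul c v =>
    obtain ⟨p, hp, hpv⟩ := mem_piece.1 v.2
    rw [pieceBaseChange_tmul, ← hpv, quotientBaseChangeEquiv_tmul_mk]
    exact Submodule.smul_mem _ _ (mem_piece.2 ⟨_, hp.map _, rfl⟩)

theorem pieceBaseChange_mulX (I : Ideal (MvPolynomial n k)) (i : ℕ) (j : n)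
    (z : K ⊗[k] piece I i) :
    pieceBaseChange K I (i + 1) ((mulX I i j).baseChange K z) =
      Ideal.Quotient.mk _ (X j) * pieceBaseChange K I i z := by
  induction z with
  | zero => rw [map_zero, map_zero, map_zero, mul_zero]
  | add x y hx hy => rw [map_add, map_add, map_add, hx, hy, mul_add]
  | tmul c v =>
    have hX : quotientBaseChangeEquiv K I (1 ⊗ₜ Ideal.Quotient.mk I (X j)) =
        Ideal.Quotient.mk _ (X j) := by
      rw [quotientBaseChangeEquiv_tmul_mk, one_smul, map_X]
    rw [LinearMap.baseChange_tmul, pieceBaseChange_tmul, coe_mulX, pieceBaseChange_tmul, ← hX,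
      ← map_mul, Algebra.TensorProduct.tmul_mul_tmul, one_mul, mul_comm]

theorem pieceBaseChange_sum_smul_mulX [Fintype n] (I : Ideal (MvPolynomial n k)) (i : ℕ)
    (t : n → K) (z : K ⊗[k] piece I i) :
    pieceBaseChange K I (i + 1) ((∑ j, t j • (mulX I i j).baseChange K) z) =
      linClass _ t * pieceBaseChange K I i z := by
  rw [linClass_eq_sum, Finset.sum_mul, LinearMap.sum_apply, map_sum]
  exact Finset.sum_congr rfl fun j _ => by
    rw [LinearMap.smul_apply, map_smul, pieceBaseChange_mulX, smul_mul_assoc]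

theorem exists_forall_linClass_mul_eq_zero [Fintype n] {I : Ideal (MvPolynomial n k)} {i : ℕ}
    (hrank : Module.finrank k (piece I i) = Module.finrank k (piece I (i + 1))) {t : n → K}
    (ht : ∀ v ∈ piece (I.map (map (algebraMap k K))) i, linClass _ t * v = 0 → v = 0) :
    ∃ f : MvPolynomial n k, f ≠ 0 ∧
      ∀ c, eval c f ≠ 0 → ∀ v ∈ piece I i, linClass I c * v = 0 → v = 0 := by
  have hinj : Function.Injective (∑ j, t j • (mulX I i j).baseChange K :
      K ⊗[k] piece I i →ₗ[K] K ⊗[k] piece I (i + 1)) := by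
    refine (injective_iff_map_eq_zero _).2 fun z hz => pieceBaseChange_injective K I i ?_
    rw [map_zero]
    refine ht _ (pieceBaseChange_mem K I i z) ?_
    rw [← pieceBaseChange_sum_smul_mulX, hz, map_zero]
  obtain ⟨f, hf, h⟩ := exists_forall_injective_sum_smul hrank (mulX I i) hinj
  refine ⟨f, hf, fun c hc v hv hcv => ?_⟩
  have hzero : (∑ j, c j • mulX I i j) ⟨v, hv⟩ = 0 :=
    Subtype.ext ((coe_sum_smul_mulX I i c ⟨v, hv⟩).trans hcv)
  exact congrArg Subtype.val ((injective_iff_map_eq_zero _).1 (h c hc) _ hzero)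

end GeneralLinearForm

section Duality

variable {k A : Type*} [Field k] [CommRing A] [Algebra k A] {G : ℕ → Submodule k A}

namespace IsFiveQuadricGrading

theorem mul_mem_succ (hG : IsFiveQuadricGrading G) {i : ℕ} {x a : A} (hx : x ∈ G 1)
    (ha : a ∈ G i) : x * a ∈ G (i + 1) :=
  add_comm 1 i ▸ hG.mul_mem hx ha

theorem eq_zero_of_forall_mul_eq_zero_of_add_eq_five (hG : IsFiveQuadricGrading G) {i j : ℕ}
    (hij : i + (j + 1) = 5) {a : A} (ha : a ∈ G i) (h : ∀ b ∈ G (j + 1), b * a = 0) : a = 0 := by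
  induction j generalizing i a with
  | zero => exact hG.eq_zero_of_forall_mul_eq_zero (by lia) ha h
  | succ j ih =>
    refine hG.eq_zero_of_forall_mul_eq_zero (by lia) ha fun x hx =>
      ih (by lia) (hG.mul_mem_succ hx ha) fun b hb => ?_
    rw [← mul_assoc]
    exact h _ (hG.mul_mem hb hx)

theorem finrank_le_of_add_eq_five (hG : IsFiveQuadricGrading G) {i j : ℕ}
    (hij : i + (j + 1) = 5) : Module.finrank k (G i) ≤ Module.finrank k (G (j + 1)) := by
  have := hG.finiteDimensional
  obtain ⟨φ, hφ⟩ := exists_functional_of_finrank_le_one hG.finrank_five_le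
  let F : G i →ₗ[k] Module.Dual k (G (j + 1)) :=
    ((LinearMap.mul k A).compr₂ φ).compl₁₂ (G i).subtype (G (j + 1)).subtype
  have hF : Function.Injective F := (injective_iff_map_eq_zero F).2 fun a ha =>
    Subtype.ext <| hG.eq_zero_of_forall_mul_eq_zero_of_add_eq_five hij a.2 fun b hb => by
      rw [mul_comm]
      exact hφ _ (hij ▸ hG.mul_mem a.2 hb) (LinearMap.congr_fun ha ⟨b, hb⟩)
  exact (LinearMap.finrank_le_finrank_of_injective hF).trans_eq Subspace.dual_finrank_eq

theorem finrank_two_eq_three (hG : IsFiveQuadricGrading G) :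
    Module.finrank k (G 2) = Module.finrank k (G 3) :=
  le_antisymm (hG.finrank_le_of_add_eq_five (j := 2) rfl)
    (hG.finrank_le_of_add_eq_five (j := 1) rfl)

theorem eq_zero_of_mul_eq_zero_of_le_two (hG : IsFiveQuadricGrading G) {L : A}
    (h : ∀ v ∈ G 2, L * v = 0 → v = 0) {i : ℕ} (hi : i ≤ 2) :
    ∀ v ∈ G i, L * v = 0 → v = 0 := by
  induction hi using Nat.decreasingInduction with
  | self => exact h
  | of_succ i hi ih =>
    refine fun v hv hLv => hG.eq_zero_of_forall_mul_eq_zero (by lia) hv fun x hx =>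
      ih _ (hG.mul_mem_succ hx hv) ?_
    rw [mul_left_comm, hLv, mul_zero]

end IsFiveQuadricGrading

theorem map_mulLeft_eq_of_injective_of_finrank_eq {V W : Submodule k A} [FiniteDimensional k V]
    [FiniteDimensional k W] (h : Module.finrank k V = Module.finrank k W) {L : A}
    (hL : ∀ v ∈ V, L * v ∈ W) (hinj : ∀ v ∈ V, L * v = 0 → v = 0) :
    V.map (LinearMap.mulLeft k L) = W := by
  refine Submodule.eq_of_le_of_finrank_eq (Submodule.map_le_iff_le_comap.2 hL) ?_
  rw [← h, ← LinearMap.range_domRestrict]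
  exact LinearMap.finrank_range_of_inj ((injective_iff_map_eq_zero _).2 fun v hv =>
    Subtype.ext (hinj v v.2 hv))

theorem map_mulLeft_mul (L : A) (V W : Submodule k A) :
    (V * W).map (LinearMap.mulLeft k L) = V.map (LinearMap.mulLeft k L) * W := by
  have hspan (U : Submodule k A) : U.map (LinearMap.mulLeft k L) = Submodule.span k {L} * U :=
    Submodule.span_singleton_mul.symm
  rw [hspan, hspan, mul_assoc]

end Duality

section WeakLefschetz

theorem piece_succ {n k : Type*} [Field k] (I : Ideal (MvPolynomial n k)) (i : ℕ) :
    piece I (i + 1) = piece I i * piece I 1 := by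
  rw [piece, piece, piece, ← Submodule.map_mul, ← homogeneousSubmodule_one_pow, pow_succ,
    homogeneousSubmodule_one_pow]

theorem map_mulLeft_piece_succ {n k : Type*} [Field k] {I : Ideal (MvPolynomial n k)}
    {L : MvPolynomial n k ⧸ I} {i : ℕ}
    (h : (piece I i).map (LinearMap.mulLeft k L) = piece I (i + 1)) :
    (piece I (i + 1)).map (LinearMap.mulLeft k L) = piece I (i + 2) := by
  rw [piece_succ I i, map_mulLeft_mul, h, ← piece_succ]

variable {k : Type*} [Field k] [IsAlgClosed k] {q : Fin 5 → MvPolynomial (Fin 5) k}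

theorem map_mulLeft_piece_of_two_le (hq : ∀ i, (q i).IsHomogeneous 2)
    (h0 : ∀ p : Fin 5 → k, (∀ i, eval p (q i) = 0) → p = 0) {c : Fin 5 → k}
    (h : ∀ v ∈ piece (Ideal.span (Set.range q)) 2, linClass _ c * v = 0 → v = 0) {i : ℕ}
    (hi : 2 ≤ i) :
    (piece (Ideal.span (Set.range q)) i).map (LinearMap.mulLeft k (linClass _ c)) =
      piece (Ideal.span (Set.range q)) (i + 1) := by
  have hG := isFiveQuadricGrading_piece hq h0
  induction i, hi using Nat.le_induction with
  | base =>
    exact map_mulLeft_eq_of_injective_of_finrank_eq hG.finrank_two_eq_three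
      (fun v hv => hG.mul_mem_succ ((range_linClass _).le ⟨c, rfl⟩) hv) h
  | succ i _ ih => exact map_mulLeft_piece_succ ih

theorem exists_forall_linClass_mul_eq_zero_two [CharZero k] (hq : ∀ i, (q i).IsHomogeneous 2)
    (h0 : ∀ p : Fin 5 → k, (∀ i, eval p (q i) = 0) → p = 0) :
    ∃ f : MvPolynomial (Fin 5) k, f ≠ 0 ∧ ∀ c, eval c f ≠ 0 →
      ∀ v ∈ piece (Ideal.span (Set.range q)) 2, linClass _ c * v = 0 → v = 0 := by
  obtain ⟨K, _, _, t, d, _, hd⟩ := exists_isAlgClosed_derivation_apply_eq_single k (Fin 5)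
  have : CharZero K := charZero_of_injective_algebraMap (algebraMap k K).injective
  exact exists_forall_linClass_mul_eq_zero K (isFiveQuadricGrading_piece hq h0).finrank_two_eq_three
    fun v hv => eq_zero_of_linClass_mul_eq_zero_of_derivation hq h0 hd hv

end WeakLefschetz

end QuadricCI

theorem stmt19_general {k : Type*} [Field k] [IsAlgClosed k] [CharZero k]
    (q : Fin 5 → MvPolynomial (Fin 5) k) (hhom : ∀ i, (q i).IsHomogeneous 2)
    (hci : ∀ p : Fin 5 → k, (∀ i, MvPolynomial.eval p (q i) = 0) → p = 0) :
    ∃ f : MvPolynomial (Fin 5) k, f ≠ 0 ∧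
      ∀ c : Fin 5 → k, MvPolynomial.eval c f ≠ 0 →
        ∀ i : ℕ,
          (∀ v ∈ QuadricCI.piece (Ideal.span (Set.range q)) i,
              QuadricCI.linClass (Ideal.span (Set.range q)) c * v = 0 → v = 0) ∨
          Submodule.map
              (LinearMap.mulLeft k (QuadricCI.linClass (Ideal.span (Set.range q)) c))
              (QuadricCI.piece (Ideal.span (Set.range q)) i)
            = QuadricCI.piece (Ideal.span (Set.range q)) (i + 1) := by
  obtain ⟨f, hf, h⟩ := QuadricCI.exists_forall_linClass_mul_eq_zero_two hhom hci
  refine ⟨f, hf, fun c hc i => ?_⟩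
  rcases le_total i 2 with hi | hi
  · exact Or.inl ((QuadricCI.isFiveQuadricGrading_piece hhom hci).eq_zero_of_mul_eq_zero_of_le_two
      (h c hc) hi)
  · exact Or.inr (QuadricCI.map_mulLeft_piece_of_two_le hhom hci (h c hc) hi)

/-- an artinian complete intersection `A = ℂ[x₀,…,x₄]/I` of 5 quadrics has the
Weak Lefschetz Property: for a general linear form `L` (i.e. for all `L` with coefficient
vector outside the zero locus of some nonzero polynomial `f`) and every `k ≥ 0`, the
multiplication `μ_L : A_k → A_{k+1}` has maximal rank (is injective or surjective). -/
theorem stmt19 (q : Fin 5 → MvPolynomial (Fin 5) ℂ)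
    (hhom : ∀ i, (q i).IsHomogeneous 2)
    (hci : ∀ p : Fin 5 → ℂ, (∀ i, MvPolynomial.eval p (q i) = 0) → p = 0) :
    ∃ f : MvPolynomial (Fin 5) ℂ, f ≠ 0 ∧
      ∀ c : Fin 5 → ℂ, MvPolynomial.eval c f ≠ 0 →
        ∀ k : ℕ,
          (∀ v ∈ gradedPiece (Ideal.span (Set.range q)) k,
              Ideal.Quotient.mkₐ ℂ (Ideal.span (Set.range q)) (linform c) * v = 0 → v = 0) ∨
          Submodule.map
              (LinearMap.mulLeft ℂ (Ideal.Quotient.mkₐ ℂ (Ideal.span (Set.range q)) (linform c)))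
              (gradedPiece (Ideal.span (Set.range q)) k)
            = gradedPiece (Ideal.span (Set.range q)) (k + 1) := by
  simp only [linform, ← QuadricCI.lin_apply]
  exact stmt19_general q hhom hci
end
end
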